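/- arXiv:2308.03634 — 2 statements merged into one kernel-verified Lean document; each statement's English description precedes it below -/
import Mathlib

section
/- Let 𝕏 be a σ-finite measure space and ℳ, 𝒩 Banach L^0(𝕏)-modules. For every α ∈ ℳ ⊗̂_π 𝒩 it holds that |α|_π = ⋁{ b̃_π(α) : b ∈ B(ℳ,𝒩), |b| ≤ 1 }, where for each b ∈ B(ℳ,𝒩), b̃_π ∈ (ℳ ⊗̂_π 𝒩)* denotes the unique homomorphism with b̃_π(v ⊗ w) = b(v,w) for all v ∈ ℳ, w ∈ 𝒩. -/
open MeasureTheory Filter Set TensorProduct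

noncomputable section

namespace Paper

variable {X : Type*} [MeasurableSpace X]

/-- The space `L⁰(𝕏)` of real-valued measurable functions up to `μ`-a.e. equality. -/
abbrev L0 (μ : Measure X) : Type _ := X →ₘ[μ] ℝ

instance (μ : Measure X) : CommRing (L0 μ) :=
  { (inferInstance : AddCommGroup (L0 μ)), (inferInstance : CommMonoid (L0 μ)) with
    left_distrib := fun a b c => AEEqFun.toGerm_injective <| by
      simp only [AEEqFun.mul_toGerm, AEEqFun.add_toGerm, mul_add]
    right_distrib := fun a b c => AEEqFun.toGerm_injective <| by
      simp only [AEEqFun.mul_toGerm, AEEqFun.add_toGerm, add_mul]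
    zero_mul := fun a => AEEqFun.toGerm_injective <| by
      simp only [AEEqFun.mul_toGerm, AEEqFun.zero_toGerm, zero_mul]
    mul_zero := fun a => AEEqFun.toGerm_injective <| by
      simp only [AEEqFun.mul_toGerm, AEEqFun.zero_toGerm, mul_zero] }

/-- The distance on `L⁰(𝕏)` inducing the topology of convergence in measure, defined through
the auxiliary finite measure `μ.toFinite` (which satisfies `μ ≪ μ.toFinite ≪ μ`). -/
noncomputable def dL0 (μ : Measure X) [SFinite μ] (f g : L0 μ) : ℝ :=
  ∫ x, min |f x - g x| 1 ∂(μ.toFinite)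

/-- A Banach `L⁰(𝕏)`-module: a module over `L⁰(𝕏)` endowed with a pointwise norm, complete
with respect to the induced distance. -/
class BanachMod (μ : Measure X) [SFinite μ] (M : Type*) [AddCommGroup M]
    [Module (L0 μ) M] where
  pn : M → L0 μ
  pn_nonneg : ∀ v : M, 0 ≤ pn v
  pn_eq_zero : ∀ v : M, pn v = 0 ↔ v = 0
  pn_add_le : ∀ v w : M, pn (v + w) ≤ pn v + pn w
  pn_smul : ∀ (f : L0 μ) (v : M), pn (f • v) = |f| * pn v
  complete : ∀ u : ℕ → M,
    (∀ ε : ℝ, 0 < ε → ∃ N : ℕ, ∀ m ≥ N, ∀ n ≥ N, dL0 μ (pn (u m - u n)) 0 < ε) →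
    ∃ v : M, Tendsto (fun n => dL0 μ (pn (u n - v)) 0) atTop (nhds 0)

/-- The pointwise norm of a Banach `L⁰(𝕏)`-module, with the measure explicit. -/
noncomputable def pn (μ : Measure X) [SFinite μ] {M : Type*} [AddCommGroup M]
    [Module (L0 μ) M] [BanachMod μ M] (v : M) : L0 μ :=
  BanachMod.pn v

/-- The distance on a Banach `L⁰(𝕏)`-module. -/
noncomputable def dM (μ : Measure X) [SFinite μ] {M : Type*} [AddCommGroup M]
    [Module (L0 μ) M] [BanachMod μ M] (v w : M) : ℝ :=
  dL0 μ (pn μ (v - w)) 0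

section Defs

variable (μ : Measure X) [SFinite μ]
variable {M N : Type*} [AddCommGroup M] [Module (L0 μ) M] [BanachMod μ M]
  [AddCommGroup N] [Module (L0 μ) N] [BanachMod μ N]

/-- The set of admissible bounds of a map between Banach `L⁰(𝕏)`-modules; the pointwise norm
`|T|` of a homomorphism is the infimum of this set. -/
def homBddSet (T : M → N) : Set (L0 μ) :=
  {g | 0 ≤ g ∧ ∀ v, pn μ (T v) ≤ g * pn μ v}

/-- A homomorphism of Banach `L⁰(𝕏)`-modules: an `L⁰(𝕏)`-linear map admitting a bound
`g ∈ L⁰(𝕏)⁺` with `|T v| ≤ g |v|` (equivalently, `L⁰(𝕏)`-linear and continuous). -/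
def IsHom (T : M →ₗ[L0 μ] N) : Prop :=
  ∃ g, g ∈ homBddSet μ (⇑T)

/-- The set of admissible bounds of an `L⁰(𝕏)`-valued map (for elements of the dual module). -/
def dualBddSet (ω : M → L0 μ) : Set (L0 μ) :=
  {g | 0 ≤ g ∧ ∀ v, |ω v| ≤ g * pn μ v}

/-- Membership in the dual module `ℳ*`: an `L⁰(𝕏)`-linear map `ω : ℳ → L⁰(𝕏)` admitting a
bound `g ∈ L⁰(𝕏)⁺` with `|ω v| ≤ g |v|`. -/
def IsDual (ω : M →ₗ[L0 μ] L0 μ) : Prop :=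
  ∃ g, g ∈ dualBddSet μ (⇑ω)

/-- Membership in the unit disc `𝔻_{ℳ*}` of the dual module: `|ω| ≤ 1`, equivalently
`|ω v| ≤ |v|` for every `v`. -/
def InDualDisc (ω : M →ₗ[L0 μ] L0 μ) : Prop :=
  ∀ v, |ω v| ≤ pn μ v

/-- The family of pointwise norms `|s - ∑_{i ∈ F ∪ G} v i|` for `G` finite disjoint from `F`,
whose `F`-indexed inf-sup being `0` defines `s = ∑_{i∈I} v i`. -/
def sumUB {I : Type*} (v : I → M) (s : M) (F : Finset I) : Set (L0 μ) :=
  {g | ∃ G : Finset I, Disjoint G F ∧ g = pn μ (s - (∑ i ∈ F, v i + ∑ i ∈ G, v i))}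

/-- `HasSumMod μ v s` means that the family `{v_i}` is summable in the Banach `L⁰(𝕏)`-module
with sum `s`, i.e. `⋀_F ⋁_G |s - ∑_{i ∈ F ∪ G} v_i| = 0` (the inner suprema being the values
of `b`, and the outer infimum being `0`). -/
def HasSumMod {I : Type*} (v : I → M) (s : M) : Prop :=
  ∃ b : Finset I → L0 μ, (∀ F, IsLUB (sumUB μ v s F) (b F)) ∧ IsGLB (Set.range b) 0

/-- A family in a Banach `L⁰(𝕏)`-module is summable if it has a sum. -/
def SummableMod {I : Type*} (v : I → M) : Prop :=
  ∃ s, HasSumMod μ v s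

/-- The partial sums `∑_{i ∈ F} |v i|` of the pointwise norms of a family; the element `|v|₁`
of `ℓ₁(I, ℳ)` is the supremum of this set. -/
def l1PartialSums {I : Type*} (v : I → M) : Set (L0 μ) :=
  {g | ∃ F : Finset I, g = ∑ i ∈ F, pn μ (v i)}

/-- Membership in `ℓ₁(I, ℳ)`: the partial sums of the pointwise norms admit a supremum
(equivalently, an upper bound) in `L⁰(𝕏)`. -/
def Meml1 {I : Type*} (v : I → M) : Prop :=
  ∃ b, IsLUB (l1PartialSums μ v) b

/-- The partial sums `∑_{i ∈ F} |v i|` for an `L⁰(𝕏)`-valued family. -/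
def l1PartialSumsF {I : Type*} (v : I → L0 μ) : Set (L0 μ) :=
  {g | ∃ F : Finset I, g = ∑ i ∈ F, |v i|}

/-- Membership in `ℓ₁(I, L⁰(𝕏))`. -/
def Meml1F {I : Type*} (v : I → L0 μ) : Prop :=
  ∃ b, IsLUB (l1PartialSumsF μ v) b

/-- The set whose infimum defines the projective pointwise norm: all values
`∑_{i=1}^n |v_i||w_i|` over representations `α = ∑_{i=1}^n v_i ⊗ w_i`. -/
def piReps (α : M ⊗[L0 μ] N) : Set (L0 μ) :=
  {g | ∃ (n : ℕ) (v : Fin n → M) (w : Fin n → N),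
    α = ∑ i, v i ⊗ₜ[L0 μ] w i ∧ g = ∑ i, pn μ (v i) * pn μ (w i)}

/-- The set whose supremum defines the injective pointwise norm: all values
`|∑_{i=1}^n ω(v_i) η(w_i)|` over representations `α = ∑_{i=1}^n v_i ⊗ w_i` and elements
`ω ∈ 𝔻_{ℳ*}`, `η ∈ 𝔻_{𝒩*}`. -/
def epsReps (α : M ⊗[L0 μ] N) : Set (L0 μ) :=
  {g | ∃ (n : ℕ) (v : Fin n → M) (w : Fin n → N)
    (ω : M →ₗ[L0 μ] L0 μ) (η : N →ₗ[L0 μ] L0 μ), InDualDisc μ ω ∧ InDualDisc μ η ∧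
    α = ∑ i, v i ⊗ₜ[L0 μ] w i ∧ g = |∑ i, ω (v i) * η (w i)|}

/-- `IsPiTensor μ M N P e` states that the Banach `L⁰(𝕏)`-module `P`, together with the
`L⁰(𝕏)`-linear map `e` defined on the algebraic tensor product, realizes the projective
tensor product `ℳ ⊗̂_π 𝒩`: the pointwise norm of `e α` is the projective pointwise norm
`|α|_π` and the image of `e` is dense. -/
structure IsPiTensor (M N P : Type*) [AddCommGroup M] [Module (L0 μ) M] [BanachMod μ M]
    [AddCommGroup N] [Module (L0 μ) N] [BanachMod μ N]
    [AddCommGroup P] [Module (L0 μ) P] [BanachMod μ P]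
    (e : M ⊗[L0 μ] N →ₗ[L0 μ] P) : Prop where
  pn_emb : ∀ α : M ⊗[L0 μ] N, IsGLB (piReps μ α) (pn μ (e α))
  dense : ∀ p : P, ∀ ε : ℝ, 0 < ε → ∃ α : M ⊗[L0 μ] N, dM μ (e α) p < ε

/-- `IsEpsTensor μ M N P e` states that the Banach `L⁰(𝕏)`-module `P`, together with the
`L⁰(𝕏)`-linear map `e` defined on the algebraic tensor product, realizes the injective
tensor product `ℳ ⊗̂_ε 𝒩`: the pointwise norm of `e α` is the injective pointwise norm
`|α|_ε` and the image of `e` is dense. -/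
structure IsEpsTensor (M N P : Type*) [AddCommGroup M] [Module (L0 μ) M] [BanachMod μ M]
    [AddCommGroup N] [Module (L0 μ) N] [BanachMod μ N]
    [AddCommGroup P] [Module (L0 μ) P] [BanachMod μ P]
    (e : M ⊗[L0 μ] N →ₗ[L0 μ] P) : Prop where
  pn_emb : ∀ α : M ⊗[L0 μ] N, IsLUB (epsReps μ α) (pn μ (e α))
  dense : ∀ p : P, ∀ ε : ℝ, 0 < ε → ∃ α : M ⊗[L0 μ] N, dM μ (e α) p < ε

end Defs

/-!
Every element `p` of a Banach `L⁰`-module has a norming functional in the unit disc of the dual.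
For `p` in the projective tensor product, restricting such a functional to elementary tensors
gives a bilinear map of norm at most `1`, so the supremum is attained. The reverse inequality
holds on the algebraic tensor product by evaluating representations, and extends by density.

Norming functionals come from the Hahn–Banach–Kantorovich theorem: real-linear maps into a Dedekind
complete space extend under domination by a sublinear map. The extension is automatically
`L⁰`-linear, because a real-linear `R : L⁰ → L⁰` with `|R f| ≤ |f| u` is multiplication by `R 1`.
-/

section HahnBanachKantorovich

section Ring

variable {R E F : Type*} [Ring R] [AddCommGroup E] [Module R E] [AddCommGroup F] [Module R F]
  {q : E → F}

theorem exists_sub_le_and_add_le_of_subadditive [ConditionallyCompleteLattice F]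
    [IsOrderedAddMonoid F] (q_add : ∀ x y, q (x + y) ≤ q x + q y) (f : E →ₗ.[R] F)
    (hf : ∀ x : f.domain, f x ≤ q x) (y : E) :
    ∃ c, ∀ x : f.domain, f x - c ≤ q (x - y) ∧ f x + c ≤ q (x + y) := by
  obtain ⟨c, hc, hc'⟩ := exists_between_of_forall_le
    (Set.range_nonempty fun x : f.domain => f x - q (x - y))
    (Set.range_nonempty fun x : f.domain => q (x + y) - f x) <| by
      rintro _ ⟨x, rfl⟩ _ ⟨x', rfl⟩
      rw [sub_le_iff_le_add, sub_add_eq_add_sub, le_sub_iff_add_le]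
      calc f x + f x' = f (x + x') := (f.map_add x x').symm
        _ ≤ q ((x' + y) + (x - y)) := by
          convert hf (x + x') using 2
          push_cast
          abel
        _ ≤ q (x' + y) + q (x - y) := q_add _ _
  exact ⟨c, fun x => ⟨sub_le_comm.1 (hc ⟨x, rfl⟩), le_sub_iff_add_le'.1 (hc' ⟨x, rfl⟩)⟩⟩

theorem linearPMap_sSup_le [Preorder F] {c : Set (E →ₗ.[R] F)} (hne : c.Nonempty)
    (hdir : DirectedOn (· ≤ ·) c) (hc : ∀ g ∈ c, ∀ x : g.domain, g x ≤ q x)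
    (x : (LinearPMap.sSup c hdir).domain) : LinearPMap.sSup c hdir x ≤ q x := by
  have hdom : DirectedOn (· ≤ ·) (LinearPMap.domain '' c) :=
    directedOn_image.2 (hdir.mono LinearPMap.domain_mono.monotone)
  obtain ⟨_, ⟨g, hg, rfl⟩, hx⟩ := (Submodule.mem_sSup_of_directed (hne.image _) hdom).1 x.2
  exact (LinearPMap.sSup_apply hdir hg ⟨x, hx⟩).trans_le (hc g hg ⟨x, hx⟩)

end Ring

variable {𝕜 E F : Type*} [DivisionRing 𝕜] [LinearOrder 𝕜] [IsStrictOrderedRing 𝕜]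
  [AddCommGroup E] [Module 𝕜 E] [AddCommGroup F] [Module 𝕜 F] {q : E → F}

theorem map_add_smul_le_of_sublinear [Preorder F] [PosSMulMono 𝕜 F]
    (q_hom : ∀ r : 𝕜, 0 < r → ∀ x, q (r • x) = r • q x)
    (f : E →ₗ.[𝕜] F) (hf : ∀ x : f.domain, f x ≤ q x) {y : E} {c : F}
    (hc : ∀ x : f.domain, f x - c ≤ q (x - y) ∧ f x + c ≤ q (x + y)) (r : 𝕜) (x : f.domain) :
    f x + r • c ≤ q (x + r • y) := by
  rcases lt_trichotomy r 0 with hr | rfl | hr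
  · have hr' : 0 < -r := neg_pos.2 hr
    calc f x + r • c = -r • (f ((-r)⁻¹ • x) - c) := by
          rw [f.map_smul, smul_sub, smul_inv_smul₀ hr'.ne', neg_smul, sub_neg_eq_add]
      _ ≤ -r • q (((-r)⁻¹ • x : f.domain) - y) := smul_le_smul_of_nonneg_left (hc _).1 hr'.le
      _ = q (x + r • y) := by
          rw [← q_hom _ hr', smul_sub, Submodule.coe_smul, smul_inv_smul₀ hr'.ne', neg_smul,
            sub_neg_eq_add]
  · simpa only [zero_smul, add_zero] using hf x
  · calc f x + r • c = r • (f (r⁻¹ • x) + c) := by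
          rw [f.map_smul, smul_add, smul_inv_smul₀ hr.ne']
      _ ≤ r • q ((r⁻¹ • x : f.domain) + y) := smul_le_smul_of_nonneg_left (hc _).2 hr.le
      _ = q (x + r • y) := by
          rw [← q_hom _ hr, smul_add, Submodule.coe_smul, smul_inv_smul₀ hr.ne']

variable [ConditionallyCompleteLattice F] [IsOrderedAddMonoid F] [PosSMulMono 𝕜 F]

theorem exists_lt_linearPMap_le_sublinear (q_hom : ∀ r : 𝕜, 0 < r → ∀ x, q (r • x) = r • q x)
    (q_add : ∀ x y, q (x + y) ≤ q x + q y) (f : E →ₗ.[𝕜] F) (hf : ∀ x : f.domain, f x ≤ q x)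
    (hdom : f.domain ≠ ⊤) : ∃ g : E →ₗ.[𝕜] F, f < g ∧ ∀ x : g.domain, g x ≤ q x := by
  obtain ⟨y, -, hy⟩ := SetLike.exists_of_lt (lt_top_iff_ne_top.2 hdom)
  obtain ⟨c, hc⟩ := exists_sub_le_and_add_le_of_subadditive q_add f hf y
  refine ⟨f.supSpanSingleton y c hy, lt_of_le_not_ge (f.left_le_sup _ _) fun hle => hy ?_, ?_⟩
  · exact hle.1 (Submodule.mem_sup_right (Submodule.mem_span_singleton_self y))
  · rintro ⟨_, hz⟩
    obtain ⟨x, hx, _, hy', rfl⟩ := Submodule.mem_sup.1 hz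
    obtain ⟨r, rfl⟩ := Submodule.mem_span_singleton.1 hy'
    rw [LinearPMap.supSpanSingleton_apply_mk _ _ _ _ _ hx]
    exact map_add_smul_le_of_sublinear q_hom f hf hc r ⟨x, hx⟩

theorem exists_linearMap_extension_le_sublinear
    (q_hom : ∀ r : 𝕜, 0 < r → ∀ x, q (r • x) = r • q x)
    (q_add : ∀ x y, q (x + y) ≤ q x + q y) (f : E →ₗ.[𝕜] F) (hf : ∀ x : f.domain, f x ≤ q x) :
    ∃ g : E →ₗ[𝕜] F, (∀ x : f.domain, g x = f x) ∧ ∀ x, g x ≤ q x := by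
  obtain ⟨g, hfg, hgq, hmax⟩ := zorn_le_nonempty₀ {g : E →ₗ.[𝕜] F | ∀ x : g.domain, g x ≤ q x}
    (fun c hcq hc g₀ hg₀ => ⟨LinearPMap.sSup c hc.directedOn,
      linearPMap_sSup_le ⟨g₀, hg₀⟩ hc.directedOn fun g hg => hcq hg,
      fun _ => LinearPMap.le_sSup hc.directedOn⟩) f hf
  have htop : g.domain = ⊤ := by
    by_contra hdom
    obtain ⟨h, hgh, hhq⟩ := exists_lt_linearPMap_le_sublinear q_hom q_add g hgq hdom
    exact hgh.not_ge (hmax hhq hgh.le)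
  exact ⟨g.toFun ∘ₗ LinearMap.id.codRestrict g.domain fun x => htop ▸ Submodule.mem_top,
    fun _ => (hfg.2 rfl).symm, fun x => hgq ⟨x, _⟩⟩

end HahnBanachKantorovich

section OrderedAlgebra

theorem eq_zero_of_abs_nonpos {G : Type*} [Lattice G] [AddGroup G] [AddLeftMono G] {a : G}
    (h : |a| ≤ 0) : a = 0 :=
  le_antisymm ((le_abs_self a).trans h) (Left.neg_nonpos_iff.1 ((neg_le_abs a).trans h))

variable {μ : Measure X}

instance : IsOrderedRing (L0 μ) :=
  Function.Injective.isOrderedRing AEEqFun.toGerm AEEqFun.zero_toGerm AEEqFun.one_toGerm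
    AEEqFun.add_toGerm AEEqFun.mul_toGerm fun {f g} => by
      rw [← AEEqFun.coeFn_le (f := f), AEEqFun.toGerm_eq, AEEqFun.toGerm_eq, Germ.coe_le]

instance : PosSMulMono ℝ (L0 μ) where
  smul_le_smul_of_nonneg_left c hc f g hfg := by
    rw [← AEEqFun.coeFn_le] at hfg ⊢
    filter_upwards [hfg, AEEqFun.coeFn_smul c f, AEEqFun.coeFn_smul c g] with x hx hf hg
    simpa only [hf, hg, Pi.smul_apply] using smul_le_smul_of_nonneg_left hx hc

instance : Algebra ℝ (L0 μ) :=
  Algebra.ofModule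
    (fun c f g => AEEqFun.induction_on₂ f g fun _ _ _ _ => by
      simp only [AEEqFun.smul_mk, AEEqFun.mk_mul_mk, smul_mul_assoc])
    (fun c f g => AEEqFun.induction_on₂ f g fun _ _ _ _ => by
      simp only [AEEqFun.smul_mk, AEEqFun.mk_mul_mk, mul_smul_comm])

theorem coeFn_algebraMap (c : ℝ) : ⇑(algebraMap ℝ (L0 μ) c) =ᵐ[μ] fun _ => c := by
  rw [Algebra.algebraMap_eq_smul_one]
  filter_upwards [AEEqFun.coeFn_smul c (1 : L0 μ), AEEqFun.coeFn_one (β := ℝ) (μ := μ)] with x hc h1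
  rw [hc, Pi.smul_apply, h1, Pi.one_apply, smul_eq_mul, mul_one]

theorem abs_mul_L0 (f g : L0 μ) : |f * g| = |f| * |g| := by
  apply AEEqFun.ext
  filter_upwards [AEEqFun.coeFn_mul f g, AEEqFun.coeFn_mul |f| |g|, AEEqFun.coeFn_abs f,
    AEEqFun.coeFn_abs g, AEEqFun.coeFn_abs (f * g)] with x hfg hfg' hf hg hfg_abs
  rw [hfg_abs, hfg, hfg', Pi.mul_apply, Pi.mul_apply, hf, hg, abs_mul]

theorem exists_nonneg_mul_eq_one {g : L0 μ} (hg : ∀ᵐ x ∂μ, 0 < g x) :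
    ∃ h : L0 μ, 0 ≤ h ∧ h * g = 1 := by
  have hinv := AEEqFun.coeFn_compMeasurable (fun t : ℝ => t⁻¹) measurable_inv g
  refine ⟨g.compMeasurable (fun t : ℝ => t⁻¹) measurable_inv, ?_, AEEqFun.ext ?_⟩
  · rw [← AEEqFun.coeFn_le]
    filter_upwards [hg, hinv, AEEqFun.coeFn_zero (β := ℝ) (μ := μ)] with x hx hinv h0
    rw [h0, hinv]
    exact (inv_pos.2 hx).le
  · filter_upwards [hg, hinv, AEEqFun.coeFn_one (β := ℝ) (μ := μ), AEEqFun.coeFn_mul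
      (g.compMeasurable (fun t : ℝ => t⁻¹) measurable_inv) g] with x hx hinv h1 hmul
    rw [h1, hmul, Pi.mul_apply, hinv]
    exact inv_mul_cancel₀ hx.ne'

end OrderedAlgebra

section DedekindComplete

/-- The supremum of `S` is the maximizer of `I` over the lower bounds of `upperBounds S`, a set
closed under countable suprema. -/
theorem exists_isLUB_of_strictMono {α : Type*} [SemilatticeSup α] {I : α → ℝ} (hI : StrictMono I)
    (hseq : ∀ f : ℕ → α, BddAbove (Set.range f) → ∃ s, IsLUB (Set.range f) s)
    {S : Set α} (hS : S.Nonempty) (hb : BddAbove S) : ∃ s, IsLUB S s := by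
  obtain ⟨u, hu⟩ := hb
  set L := lowerBounds (upperBounds S)
  have hSL : S ⊆ L := subset_lowerBounds_upperBounds S
  have hbdd : BddAbove (I '' L) :=
    ⟨I u, forall_mem_image.2 fun f hf => hI.monotone (hf hu)⟩
  obtain ⟨a, -, ha, haL⟩ := exists_seq_tendsto_sSup ((hS.mono hSL).image I) hbdd
  choose f hfL hfa using haL
  obtain ⟨s, hs⟩ := hseq f ⟨u, forall_mem_range.2 fun n => hfL n hu⟩
  have hsL : s ∈ L := fun g hg => hs.2 (forall_mem_range.2 fun n => hfL n hg)
  have hsSup : sSup (I '' L) ≤ I s :=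
    le_of_tendsto' ha fun n => hfa n ▸ hI.monotone (hs.1 (mem_range_self n))
  refine ⟨s, fun g hg => ?_, hsL⟩
  by_contra hgs
  have hsup : s ⊔ g ∈ L := fun k hk => sup_le (hsL hk) (hSL hg hk)
  exact ((le_csSup hbdd ⟨_, hsup, rfl⟩).trans hsSup).not_gt (hI (left_lt_sup.2 hgs))

variable {μ : Measure X}

theorem exists_isLUB_range_nat (f : ℕ → L0 μ) (hf : BddAbove (Set.range f)) :
    ∃ s, IsLUB (Set.range f) s := by
  obtain ⟨u, hu⟩ := hf
  have hm : Measurable fun x => ⨆ n, f n x := Measurable.iSup fun n => (f n).measurable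
  have hcoe := AEEqFun.coeFn_mk (μ := μ) _ hm.aestronglyMeasurable
  have ae_le {v : L0 μ} (hv : v ∈ upperBounds (Set.range f)) : ∀ᵐ x ∂μ, ∀ n, f n x ≤ v x :=
    ae_all_iff.2 fun n => AEEqFun.coeFn_le.2 (hv ⟨n, rfl⟩)
  refine ⟨AEEqFun.mk _ hm.aestronglyMeasurable, forall_mem_range.2 fun n => ?_, fun v hv => ?_⟩
  · rw [← AEEqFun.coeFn_le]
    filter_upwards [hcoe, ae_le hu] with x hx hfu
    rw [hx]
    exact le_ciSup (f := fun n => f n x) ⟨u x, forall_mem_range.2 hfu⟩ n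
  · rw [← AEEqFun.coeFn_le]
    filter_upwards [hcoe, ae_le hv] with x hx hfv
    rw [hx]
    exact ciSup_le hfv

variable [SFinite μ]

theorem integrable_arctan_toFinite (f : L0 μ) :
    Integrable (fun x => Real.arctan (f x)) μ.toFinite :=
  Integrable.of_bound (C := Real.pi / 2)
    (Real.measurable_arctan.comp f.measurable).aestronglyMeasurable <| .of_forall fun _ =>
      (abs_lt.2 ⟨Real.neg_pi_div_two_lt_arctan _, Real.arctan_lt_pi_div_two _⟩).le

theorem strictMono_integral_arctan :
    StrictMono fun f : L0 μ => ∫ x, Real.arctan (f x) ∂μ.toFinite := by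
  intro f g hfg
  have hle : ∀ᵐ x ∂μ.toFinite, Real.arctan (f x) ≤ Real.arctan (g x) := by
    rw [ae_toFinite]
    filter_upwards [AEEqFun.coeFn_le.2 hfg.le] with x hx using Real.arctan_strictMono.monotone hx
  have hf := integrable_arctan_toFinite f
  have hg := integrable_arctan_toFinite g
  refine (integral_mono_ae hf hg hle).lt_of_ne fun heq => hfg.ne (AEEqFun.ext ?_)
  have hae := (integral_eq_iff_of_ae_le hf hg hle).1 heq
  rw [ae_toFinite] at hae
  filter_upwards [hae] with x hx using Real.arctan_strictMono.injective hx

open Classical in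
/-- The lattice supremum in `L⁰`, which makes `L⁰` conditionally complete; its value is `0` on
sets without a least upper bound. -/
instance : SupSet (L0 μ) where
  sSup S := if h : ∃ s, IsLUB S s then h.choose else 0

instance : ConditionallyCompleteLattice (L0 μ) :=
  conditionallyCompleteLatticeOfLatticeOfsSup (L0 μ) fun S hb hS => by
    have h := exists_isLUB_of_strictMono strictMono_integral_arctan exists_isLUB_range_nat hS hb
    rw [show sSup S = h.choose from dif_pos h]
    exact h.choose_spec

end DedekindComplete

section Distance

variable {μ : Measure X} [SFinite μ]

theorem integrable_min_abs_sub_one (f g : L0 μ) :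
    Integrable (fun x => min |f x - g x| 1) μ.toFinite :=
  Integrable.of_bound (C := 1)
    ((f.measurable.sub g.measurable).abs.min measurable_const).aestronglyMeasurable <|
      .of_forall fun x => by
        rw [Real.norm_eq_abs, abs_of_nonneg (by positivity)]
        exact min_le_right _ _

theorem dL0_nonneg (f g : L0 μ) : 0 ≤ dL0 μ f g :=
  integral_nonneg fun x => by positivity

theorem dL0_le_dL0_of_abs_sub_le {f g f' g' : L0 μ} (h : |f - g| ≤ |f' - g'|) :
    dL0 μ f g ≤ dL0 μ f' g' := by
  refine integral_mono_ae (integrable_min_abs_sub_one f g) (integrable_min_abs_sub_one f' g') ?_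
  rw [EventuallyLE, ae_toFinite]
  filter_upwards [AEEqFun.coeFn_le.2 h, AEEqFun.coeFn_abs (f - g), AEEqFun.coeFn_sub f g,
    AEEqFun.coeFn_abs (f' - g'), AEEqFun.coeFn_sub f' g'] with x hx habs hsub habs' hsub'
  rw [habs, hsub, habs', hsub'] at hx
  exact min_le_min_right 1 hx

theorem eq_of_dL0_eq_zero {f g : L0 μ} (h : dL0 μ f g = 0) : f = g := by
  have hae := (integral_eq_zero_iff_of_nonneg (fun x => by positivity)
    (integrable_min_abs_sub_one f g)).1 h
  rw [EventuallyEq, ae_toFinite] at hae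
  refine AEEqFun.ext (hae.mono fun x hx => ?_)
  rcases min_choice |f x - g x| 1 with hmin | hmin <;> rw [hmin] at hx
  · exact sub_eq_zero.1 (abs_eq_zero.1 hx)
  · exact absurd hx one_ne_zero

theorem nonpos_of_forall_exists_le_dL0_lt {f : L0 μ}
    (h : ∀ ε : ℝ, 0 < ε → ∃ u, f ≤ u ∧ dL0 μ u 0 < ε) : f ≤ 0 := by
  have hdist : dL0 μ (f⁺) 0 ≤ 0 := le_of_forall_pos_lt_add fun ε hε => by
    obtain ⟨u, hfu, hu⟩ := h ε hε
    rw [zero_add]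
    refine (dL0_le_dL0_of_abs_sub_le ?_).trans_lt hu
    rw [sub_zero, sub_zero, abs_of_nonneg (posPart_nonneg f)]
    exact sup_le (hfu.trans (le_abs_self u)) (abs_nonneg u)
  exact posPart_eq_zero.1 (eq_of_dL0_eq_zero (hdist.antisymm (dL0_nonneg _ _)))

end Distance

section Orthomorphism

variable {μ : Measure X}

theorem nonpos_of_forall_le_abs_sub_algebraMap_mul {d f u : L0 μ}
    (h : ∀ a : ℝ, d ≤ |f - algebraMap ℝ (L0 μ) a| * u) : d ≤ 0 := by
  have hrat : ∀ᵐ x ∂μ, ∀ a : ℚ, d x ≤ |f x - a| * u x := ae_all_iff.2 fun a => by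
    filter_upwards [AEEqFun.coeFn_le.2 (h a), AEEqFun.coeFn_mul |f - algebraMap ℝ (L0 μ) a| u,
      AEEqFun.coeFn_abs (f - algebraMap ℝ (L0 μ) a), AEEqFun.coeFn_sub f (algebraMap ℝ (L0 μ) a),
      coeFn_algebraMap (μ := μ) a] with x hx hmul habs hsub ha
    rwa [hmul, Pi.mul_apply, habs, hsub, Pi.sub_apply, ha] at hx
  rw [← AEEqFun.coeFn_le]
  filter_upwards [hrat, AEEqFun.coeFn_zero (β := ℝ) (μ := μ)] with x hx h0
  have hreal : ∀ a : ℝ, d x ≤ |f x - a| * u x := fun a =>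
    Rat.denseRange_cast.induction_on a (isClosed_le continuous_const (by fun_prop)) hx
  simpa only [h0, Pi.zero_apply, sub_self, abs_zero, zero_mul] using hreal (f x)

/-- The defect `R f - f * R 1` is unchanged when a constant `a` is subtracted from `f`, so it is
at most `|f - a| * (u + |R 1|)` for every `a`. -/
theorem map_eq_mul_map_one_of_abs_le (R : L0 μ →ₗ[ℝ] L0 μ) {u : L0 μ}
    (hR : ∀ f, |R f| ≤ |f| * u) (f : L0 μ) : R f = f * R 1 := by
  suffices |R f - f * R 1| ≤ 0 from sub_eq_zero.1 (eq_zero_of_abs_nonpos this)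
  refine nonpos_of_forall_le_abs_sub_algebraMap_mul (f := f) (u := u + |R 1|) fun a => ?_
  set g := f - algebraMap ℝ (L0 μ) a with hg
  have hdefect : R f - f * R 1 = R g - g * R 1 := by
    rw [hg, map_sub, Algebra.algebraMap_eq_smul_one, map_smul, sub_mul, smul_one_mul]
    abel
  calc |R f - f * R 1| = |R g - g * R 1| := by rw [hdefect]
    _ ≤ |R g| + |g * R 1| := by
      simpa only [sub_eq_add_neg, abs_neg] using abs_add_le (R g) (-(g * R 1))
    _ ≤ |g| * u + |g| * |R 1| := add_le_add (hR g) (abs_mul_L0 g (R 1)).le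
    _ = |g| * (u + |R 1|) := (mul_add _ _ _).symm

end Orthomorphism

section ModuleHahnBanach

variable {μ : Measure X} {E : Type*} [AddCommGroup E] [Module (L0 μ) E] {q : E → L0 μ}

theorem sublinear_smul_le (q_hom : ∀ f : L0 μ, 0 ≤ f → ∀ x, q (f • x) = f * q x)
    (q_add : ∀ x y, q (x + y) ≤ q x + q y) (f : L0 μ) (x : E) :
    q (f • x) ≤ |f| * (q x ⊔ q (-x)) :=
  calc q (f • x) = q (f⁺ • x + f⁻ • -x) := by
        rw [smul_neg, ← sub_eq_add_neg, ← sub_smul, posPart_sub_negPart]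
    _ ≤ f⁺ * q x + f⁻ * q (-x) := by
        rw [← q_hom _ (posPart_nonneg f), ← q_hom _ (negPart_nonneg f)]
        exact q_add _ _
    _ ≤ f⁺ * (q x ⊔ q (-x)) + f⁻ * (q x ⊔ q (-x)) :=
        add_le_add (mul_le_mul_of_nonneg_left le_sup_left (posPart_nonneg f))
          (mul_le_mul_of_nonneg_left le_sup_right (negPart_nonneg f))
    _ = |f| * (q x ⊔ q (-x)) := by rw [← add_mul, posPart_add_negPart]

theorem map_smul_of_le_sublinear [Module ℝ E] [IsScalarTower ℝ (L0 μ) E]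
    (q_hom : ∀ f : L0 μ, 0 ≤ f → ∀ x, q (f • x) = f * q x)
    (q_add : ∀ x y, q (x + y) ≤ q x + q y) (T : E →ₗ[ℝ] L0 μ) (hT : ∀ x, T x ≤ q x)
    (f : L0 μ) (x : E) : T (f • x) = f * T x := by
  have hle : ∀ f : L0 μ, T (f • x) ≤ |f| * (q x ⊔ q (-x)) := fun f =>
    (hT _).trans (sublinear_smul_le q_hom q_add f x)
  have habs : ∀ f : L0 μ, |T (f • x)| ≤ |f| * (q x ⊔ q (-x)) := fun f =>
    abs_le'.2 ⟨hle f, by simpa only [neg_smul, map_neg, abs_neg] using hle (-f)⟩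
  simpa using map_eq_mul_map_one_of_abs_le
    (T ∘ₗ (LinearMap.toSpanSingleton (L0 μ) E x).restrictScalars ℝ) habs f

variable [SFinite μ]

theorem exists_L0_linearMap_extension_le_sublinear
    (q_hom : ∀ f : L0 μ, 0 ≤ f → ∀ x, q (f • x) = f * q x)
    (q_add : ∀ x y, q (x + y) ≤ q x + q y) (f : E →ₗ.[L0 μ] L0 μ)
    (hf : ∀ x : f.domain, f x ≤ q x) :
    ∃ g : E →ₗ[L0 μ] L0 μ, (∀ x : f.domain, g x = f x) ∧ ∀ x, g x ≤ q x := by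
  let _ : Module ℝ E := Module.compHom E (algebraMap ℝ (L0 μ))
  have : IsScalarTower ℝ (L0 μ) E := .of_compHom ℝ (L0 μ) E
  obtain ⟨T, hTf, hTq⟩ := exists_linearMap_extension_le_sublinear (q := q)
    (fun r hr x => by
      have hr1 : (0 : L0 μ) ≤ r • 1 := smul_nonneg hr.le zero_le_one
      rw [← smul_one_smul (L0 μ) r x, q_hom _ hr1, smul_one_mul])
    q_add ⟨f.domain.restrictScalars ℝ, f.toFun.restrictScalars ℝ⟩ hf
  exact ⟨{ T with map_smul' := map_smul_of_le_sublinear q_hom q_add T hTq }, hTf, hTq⟩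

end ModuleHahnBanach

section BanachModule

variable {μ : Measure X} [SFinite μ] {P : Type*} [AddCommGroup P] [Module (L0 μ) P]
  [BanachMod μ P]

theorem pn_neg (v : P) : pn μ (-v) = pn μ v := by
  have h := BanachMod.pn_smul (-1 : L0 μ) v
  rwa [neg_one_smul, abs_neg, abs_of_nonneg zero_le_one, one_mul] at h

theorem pn_smul_of_nonneg {f : L0 μ} (hf : 0 ≤ f) (v : P) : pn μ (f • v) = f * pn μ v :=
  (BanachMod.pn_smul f v).trans (by rw [abs_of_nonneg hf]; rfl)

theorem exists_norming_functional (p : P) :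
    ∃ B : P →ₗ[L0 μ] L0 μ, InDualDisc μ B ∧ B p = pn μ p := by
  have hzero : ∀ c : L0 μ, c • p = 0 → c • pn μ p = 0 := fun c hc => by
    have hpn : |c| * pn μ p = 0 :=
      (BanachMod.pn_smul c p).symm.trans ((BanachMod.pn_eq_zero _).2 hc)
    have hp : |pn μ p| = pn μ p := abs_of_nonneg (BanachMod.pn_nonneg p)
    refine eq_zero_of_abs_nonpos (le_of_eq ?_)
    rw [smul_eq_mul, abs_mul_L0, hp, hpn]
  set f : P →ₗ.[L0 μ] L0 μ := LinearPMap.mkSpanSingleton' p (pn μ p) hzero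
  have hf : ∀ x : f.domain, f x ≤ pn μ (x : P) := by
    rintro ⟨_, hx⟩
    obtain ⟨c, rfl⟩ := Submodule.mem_span_singleton.1 hx
    calc f ⟨c • p, hx⟩ = c * pn μ p := LinearPMap.mkSpanSingleton'_apply _ _ _ _ _
      _ ≤ |c| * pn μ p := mul_le_mul_of_nonneg_right (le_abs_self c) (BanachMod.pn_nonneg p)
      _ = pn μ (c • p) := (BanachMod.pn_smul c p).symm
  obtain ⟨B, hBf, hB⟩ := exists_L0_linearMap_extension_le_sublinear
    (fun _ hc v => pn_smul_of_nonneg hc v) BanachMod.pn_add_le f hf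
  refine ⟨B, fun v => abs_le'.2 ⟨hB v, ?_⟩, ?_⟩
  · rw [← map_neg, ← pn_neg v]
    exact hB (-v)
  · exact (hBf ⟨p, Submodule.mem_span_singleton_self p⟩).trans
      (LinearPMap.mkSpanSingleton'_apply_self _ _ _ _)

theorem InDualDisc.isDual {B : P →ₗ[L0 μ] L0 μ} (hB : InDualDisc μ B) : IsDual μ B :=
  ⟨1, zero_le_one, fun v => (hB v).trans_eq (one_mul _).symm⟩

/-- Density only controls `pn μ (d - p)` in measure, and the factor `1 + g` is a function, so the
estimate is divided by `1 + g` before passing to the limit. -/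
theorem IsDual.le_pn_of_dense {B : P →ₗ[L0 μ] L0 μ} (hB : IsDual μ B) {D : Set P}
    (hD : ∀ p, ∀ ε : ℝ, 0 < ε → ∃ d ∈ D, dM μ d p < ε) (hBD : ∀ d ∈ D, B d ≤ pn μ d) (p : P) :
    B p ≤ pn μ p := by
  obtain ⟨g, hg, hBg⟩ := hB
  have hpos : ∀ᵐ x ∂μ, 0 < (1 + g : L0 μ) x := by
    filter_upwards [AEEqFun.coeFn_le.2 (le_add_of_nonneg_right hg : 1 ≤ 1 + g),
      AEEqFun.coeFn_one (β := ℝ) (μ := μ)] with x hx h1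
    rw [h1] at hx
    exact zero_lt_one.trans_le hx
  obtain ⟨h, hh, hh1⟩ := exists_nonneg_mul_eq_one hpos
  have happrox (d : P) (hd : d ∈ D) : B p - pn μ p ≤ (1 + g) * pn μ (d - p) := by
    have hdiff : B (p - d) ≤ g * pn μ (d - p) := by
      rw [← pn_neg (d - p), neg_sub]
      exact (le_abs_self _).trans (hBg _)
    have htri : pn μ d ≤ pn μ p + pn μ (d - p) := by
      have h := BanachMod.pn_add_le (μ := μ) p (d - p)
      rwa [add_sub_cancel] at h
    calc B p - pn μ p = B d + B (p - d) - pn μ p := by rw [← map_add, add_sub_cancel]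
      _ ≤ pn μ p + pn μ (d - p) + g * pn μ (d - p) - pn μ p := by
        gcongr
        exact (hBD d hd).trans htri
      _ = (1 + g) * pn μ (d - p) := by ring
  have hscaled : h * (B p - pn μ p) ≤ 0 := nonpos_of_forall_exists_le_dL0_lt fun ε hε => by
    obtain ⟨d, hd, hdp⟩ := hD p ε hε
    refine ⟨pn μ (d - p), ?_, hdp⟩
    calc h * (B p - pn μ p) ≤ h * ((1 + g) * pn μ (d - p)) :=
          mul_le_mul_of_nonneg_left (happrox d hd) hh
      _ = pn μ (d - p) := by rw [← mul_assoc, hh1, one_mul]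
  rw [← sub_nonpos]
  calc B p - pn μ p = (1 + g) * (h * (B p - pn μ p)) := by
        rw [← mul_assoc, mul_comm (1 + g), hh1, one_mul]
    _ ≤ 0 := mul_nonpos_of_nonneg_of_nonpos (add_nonneg zero_le_one hg) hscaled

end BanachModule

section ProjectiveTensor

variable {μ : Measure X} [SFinite μ] {M N P : Type*}
  [AddCommGroup M] [Module (L0 μ) M] [BanachMod μ M]
  [AddCommGroup N] [Module (L0 μ) N] [BanachMod μ N]
  [AddCommGroup P] [Module (L0 μ) P] [BanachMod μ P]
  {e : M ⊗[L0 μ] N →ₗ[L0 μ] P}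

theorem IsPiTensor.pn_tmul_le (hP : IsPiTensor μ M N P e) (v : M) (w : N) :
    pn μ (e (v ⊗ₜ[L0 μ] w)) ≤ pn μ v * pn μ w :=
  (hP.pn_emb _).1 ⟨1, fun _ => v, fun _ => w, by simp, by simp⟩

theorem IsPiTensor.apply_le_pn (hP : IsPiTensor μ M N P e) {L : M ⊗[L0 μ] N →ₗ[L0 μ] L0 μ}
    (hL : ∀ v w, L (v ⊗ₜ[L0 μ] w) ≤ pn μ v * pn μ w) (α : M ⊗[L0 μ] N) : L α ≤ pn μ (e α) := by
  refine (hP.pn_emb α).2 ?_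
  rintro _ ⟨n, v, w, rfl, rfl⟩
  rw [map_sum]
  exact Finset.sum_le_sum fun i _ => hL (v i) (w i)

theorem IsPiTensor.le_pn (hP : IsPiTensor μ M N P e) {B : P →ₗ[L0 μ] L0 μ} (hB : IsDual μ B)
    (hBe : ∀ v w, B (e (v ⊗ₜ[L0 μ] w)) ≤ pn μ v * pn μ w) (p : P) : B p ≤ pn μ p := by
  refine hB.le_pn_of_dense (D := Set.range e) (fun p ε hε => ?_) ?_ p
  · simpa only [exists_range_iff] using hP.dense p ε hε
  · exact forall_mem_range.2 (hP.apply_le_pn (L := B ∘ₗ e) hBe)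

end ProjectiveTensor

theorem projective_norm_dual_formula_general
    (μ : Measure X) [SFinite μ]
    (M : Type*) [AddCommGroup M] [Module (L0 μ) M] [BanachMod μ M]
    (N : Type*) [AddCommGroup N] [Module (L0 μ) N] [BanachMod μ N]
    (P : Type*) [AddCommGroup P] [Module (L0 μ) P] [BanachMod μ P]
    (e : M ⊗[L0 μ] N →ₗ[L0 μ] P) (hP : IsPiTensor μ M N P e) (p : P) :
    IsGreatest {g : L0 μ | ∃ (b : M →ₗ[L0 μ] N →ₗ[L0 μ] L0 μ) (B : P →ₗ[L0 μ] L0 μ),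
      (∀ (v : M) (w : N), |b v w| ≤ pn μ v * pn μ w) ∧ IsDual μ B ∧
      (∀ (v : M) (w : N), B (e (v ⊗ₜ[L0 μ] w)) = b v w) ∧ g = B p} (pn μ p) := by
  constructor
  · obtain ⟨B, hB, hBp⟩ := exists_norming_functional (μ := μ) p
    exact ⟨(TensorProduct.mk (L0 μ) M N).compr₂ (B ∘ₗ e), B,
      fun v w => (hB _).trans (hP.pn_tmul_le v w), hB.isDual, fun _ _ => rfl, hBp.symm⟩
  · rintro _ ⟨b, B, hb, hB, hBb, rfl⟩
    exact hP.le_pn hB (fun v w => (hBb v w).trans_le ((le_abs_self _).trans (hb v w))) p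

/-- dual representation formula for the projective pointwise norm.
For every `α ∈ ℳ ⊗̂_π 𝒩` it holds `|α|_π = ⋁ { b̃_π(α) : b ∈ B(ℳ,𝒩), |b| ≤ 1 }`, where for
`b ∈ B(ℳ,𝒩)` with `|b| ≤ 1` (i.e. `|b(v,w)| ≤ |v||w|`), `b̃_π ∈ (ℳ ⊗̂_π 𝒩)*` denotes the
unique bounded homomorphism with `b̃_π(v ⊗ w) = b(v,w)`. Here `P` realizes `ℳ ⊗̂_π 𝒩`. -/
theorem projective_norm_dual_formula
    (μ : Measure X) [SigmaFinite μ]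
    (M : Type*) [AddCommGroup M] [Module (L0 μ) M] [BanachMod μ M]
    (N : Type*) [AddCommGroup N] [Module (L0 μ) N] [BanachMod μ N]
    (P : Type*) [AddCommGroup P] [Module (L0 μ) P] [BanachMod μ P]
    (e : M ⊗[L0 μ] N →ₗ[L0 μ] P) (hP : IsPiTensor μ M N P e) (p : P) :
    IsLUB {g : L0 μ | ∃ (b : M →ₗ[L0 μ] N →ₗ[L0 μ] L0 μ) (B : P →ₗ[L0 μ] L0 μ),
      (∀ (v : M) (w : N), |b v w| ≤ pn μ v * pn μ w) ∧ IsDual μ B ∧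
      (∀ (v : M) (w : N), B (e (v ⊗ₜ[L0 μ] w)) = b v w) ∧ g = B p} (pn μ p) :=
  (projective_norm_dual_formula_general μ M N P e hP p).isLUB

end Paper
end
end

section
/- Let 𝕏 = (X,Σ_X,𝔪_X) and 𝕐 = (Y,Σ_Y,𝔪_Y) be separable σ-finite measure spaces, and φ : X → Y a measurable map with φ_#𝔪_X ≪ 𝔪_Y. Let ℳ, 𝒩 be Banach L^0(𝕐)-modules. Then there is a unique homomorphism φ* : ℳ ⊗̂_π 𝒩 → (φ*ℳ) ⊗̂_π (φ*𝒩) with φ*(v ⊗ w) = (φ*v) ⊗ (φ*w) for all v ∈ ℳ, w ∈ 𝒩; it satisfies |φ*α|_π = |α|_π ∘ φ for every α ∈ ℳ ⊗̂_π 𝒩, and its image generates (φ*ℳ) ⊗̂_π (φ*𝒩), so that ((φ*ℳ) ⊗̂_π (φ*𝒩), φ*) is a realization of the pullback of ℳ ⊗̂_π 𝒩; in particular φ*(ℳ ⊗̂_π 𝒩) ≅ (φ*ℳ) ⊗̂_π (φ*𝒩) as Banach L^0(𝕏)-modules. -/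
/-!
Between the algebraic tensor products, the map `Ψ : v ⊗ w ↦ φ*v ⊗ φ*w` satisfies
`|Ψ α|_π = |α|_π ∘ φ`; everything else follows by density.

For `|Ψ α|_π ≤ |α|_π ∘ φ`, every representation of `α` is mapped to a representation of `Ψ α`, and
composition with `φ` commutes with infima in `L⁰`, since each of them is the pointwise infimum of
a sequence of finite infima.

For the reverse inequality, the Hahn–Banach theorem for `L⁰`-modules, which rests on the Dedekind
completeness of `L⁰`, provides a functional `ω` with `|ω| ≤ 1` and `ω α = |α|_π`. The form
`(v, w) ↦ ω (v ⊗ w) ∘ φ` extends to a bilinear form on the pullbacks bounded by `|u| |z|`, since a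
bounded map on `ℳ` that is semilinear along `φ` factors through `φ*ℳ`. The linearization of this
extension on `φ*ℳ ⊗ φ*𝒩` is dominated by the projective norm and takes the value `|α|_π ∘ φ` at
`Ψ α`.

The elements `φ*v ⊗ φ*w` generate the target because the `φ*v` and the `φ*w` generate `φ*ℳ` and
`φ*𝒩` and `⊗` is continuous in each factor.
-/

open MeasureTheory Filter Set TensorProduct

noncomputable section

namespace Paper

variable {X : Type*} [MeasurableSpace X]

/-- A σ-finite measure space is separable: there is a sequence of measurable sets
approximating every finite-measure set in measure. -/
def MeasSeparable {Y : Type*} [MeasurableSpace Y] (ν : Measure Y) : Prop :=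
  ∃ E : ℕ → Set Y, (∀ n, MeasurableSet (E n)) ∧
    ∀ F : Set Y, MeasurableSet F → ν F < ⊤ →
      ∀ ε : ENNReal, 0 < ε → ∃ n, ν (symmDiff (E n) F) < ε

/-- Composition with `φ`, as a map `L⁰(𝕐) → L⁰(𝕏)` (for `φ` with `φ_# μ ≪ ν`). -/
def pullL0 {Y : Type*} [MeasurableSpace Y] {μ : Measure X} {ν : Measure Y} {φ : X → Y}
    (hφ : Measure.QuasiMeasurePreserving φ μ ν) (f : L0 ν) : L0 μ :=
  f.compQuasiMeasurePreserving φ hφ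

/-- `(Mp, pb)` is a realization of the pullback `φ*ℳ` of the Banach `L⁰(𝕐)`-module `ℳ`:
`pb` is linear, `pb (f • v) = (f ∘ φ) • pb v`, `|pb v| = |v| ∘ φ`, and the `L⁰(𝕏)`-module
generated by the image of `pb` is dense in `Mp`. -/
structure IsPullback {Y : Type*} [MeasurableSpace Y] (μ : Measure X) [SFinite μ]
    (ν : Measure Y) [SFinite ν] (φ : X → Y) (hφ : Measure.QuasiMeasurePreserving φ μ ν)
    (M : Type*) [AddCommGroup M] [Module (L0 ν) M] [BanachMod ν M]
    (Mp : Type*) [AddCommGroup Mp] [Module (L0 μ) Mp] [BanachMod μ Mp]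
    (pb : M → Mp) : Prop where
  add : ∀ v w : M, pb (v + w) = pb v + pb w
  smul : ∀ (f : L0 ν) (v : M), pb (f • v) = pullL0 hφ f • pb v
  pnorm : ∀ v : M, pn μ (pb v) = pullL0 hφ (pn ν v)
  dense : ∀ u : Mp, ∀ ε : ℝ, 0 < ε →
    ∃ w ∈ Submodule.span (L0 μ) (Set.range pb), dM μ w u < ε

/-! ### The ordered ring `L⁰` -/

namespace L0

variable {μ : Measure X}

theorem nonneg_iff_ae {f : L0 μ} : 0 ≤ f ↔ ∀ᵐ x ∂μ, 0 ≤ f x := by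
  rw [← AEEqFun.coeFn_le]
  exact eventually_congr <| (AEEqFun.coeFn_zero (μ := μ) (β := ℝ)).mono fun x hx => by
    rw [hx, Pi.zero_apply]

instance : IsOrderedAddMonoid (L0 μ) where
  add_le_add_left f g hfg h := AEEqFun.coeFn_le.1 <| by
    filter_upwards [AEEqFun.coeFn_le.2 hfg, AEEqFun.coeFn_add f h, AEEqFun.coeFn_add g h]
      with x hle hf hg
    rw [hf, hg]
    exact add_le_add_left hle (h x)

instance : ZeroLEOneClass (L0 μ) where
  zero_le_one := nonneg_iff_ae.2 <| (AEEqFun.coeFn_one (μ := μ) (β := ℝ)).mono fun x hx => by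
    rw [hx, Pi.one_apply]
    exact zero_le_one

instance : IsOrderedRing (L0 μ) :=
  IsOrderedRing.of_mul_nonneg fun f g hf hg => nonneg_iff_ae.2 <| by
    filter_upwards [nonneg_iff_ae.1 hf, nonneg_iff_ae.1 hg, AEEqFun.coeFn_mul f g]
      with x hfx hgx hmul
    rw [hmul]
    exact mul_nonneg hfx hgx

theorem abs_mul (f g : L0 μ) : |f * g| = |f| * |g| := AEEqFun.ext <| by
  filter_upwards [AEEqFun.coeFn_abs (f * g), AEEqFun.coeFn_mul f g, AEEqFun.coeFn_mul |f| |g|,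
    AEEqFun.coeFn_abs f, AEEqFun.coeFn_abs g] with x h₁ h₂ h₃ h₄ h₅
  simp only [h₁, h₂, h₃, h₄, h₅, Pi.mul_apply, _root_.abs_mul]

theorem abs_eq_zero {f : L0 μ} : |f| = 0 ↔ f = 0 := by
  refine ⟨fun h => le_antisymm (h ▸ le_abs_self f) ?_, fun h => by rw [h, abs_zero]⟩
  exact neg_nonpos.1 (h ▸ neg_le_abs f)

/-- The ring embedding `ℝ → L⁰` of the constant functions. -/
def const (μ : Measure X) : ℝ →+* L0 μ where
  toFun := AEEqFun.const X
  map_zero' := rfl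
  map_one' := rfl
  map_add' _ _ := rfl
  map_mul' _ _ := rfl

theorem coeFn_const (c : ℝ) : ⇑(const μ c) =ᵐ[μ] fun _ => c :=
  AEEqFun.coeFn_const X c

theorem const_nonneg {c : ℝ} (hc : 0 ≤ c) : 0 ≤ const μ c :=
  nonneg_iff_ae.2 <| (coeFn_const c).mono fun _ hx => hc.trans_eq hx.symm

end L0

/-! ### Convergence in `L⁰` -/

section Convergence

variable {μ : Measure X}

/-- Almost everywhere convergence to `0` of a sequence in `L⁰`; limits in Banach modules are
expressed by applying it to the pointwise norms of the differences. -/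
def TendstoZeroAE (h : ℕ → L0 μ) : Prop :=
  ∀ᵐ x ∂μ, Tendsto (fun n => h n x) atTop (nhds 0)

namespace TendstoZeroAE

theorem zero : TendstoZeroAE fun _ : ℕ => (0 : L0 μ) :=
  (AEEqFun.coeFn_zero (μ := μ) (β := ℝ)).mono fun x hx => by
    simp only [hx, Pi.zero_apply, tendsto_const_nhds]

theorem add {h k : ℕ → L0 μ} (hh : TendstoZeroAE h) (hk : TendstoZeroAE k) :
    TendstoZeroAE fun n => h n + k n := by
  filter_upwards [hh, hk, ae_all_iff.2 fun n => AEEqFun.coeFn_add (h n) (k n)] with x h₁ h₂ h₃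
  simpa only [h₃, Pi.add_apply, add_zero] using h₁.add h₂

theorem const_mul {h : ℕ → L0 μ} (hh : TendstoZeroAE h) (g : L0 μ) :
    TendstoZeroAE fun n => g * h n := by
  filter_upwards [hh, ae_all_iff.2 fun n => AEEqFun.coeFn_mul g (h n)] with x h₁ h₂
  simpa only [h₂, Pi.mul_apply, mul_zero] using h₁.const_mul (g x)

theorem squeeze {h k : ℕ → L0 μ} (hh : TendstoZeroAE h) (k_nonneg : ∀ n, 0 ≤ k n)
    (hk : ∀ n, k n ≤ h n) : TendstoZeroAE k := by
  filter_upwards [hh, ae_all_iff.2 fun n => L0.nonneg_iff_ae.1 (k_nonneg n),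
    ae_all_iff.2 fun n => AEEqFun.coeFn_le.2 (hk n)] with x h₁ h₂ h₃
  exact squeeze_zero h₂ h₃ h₁

theorem le_of_forall_le_add {h : ℕ → L0 μ} (hh : TendstoZeroAE h) {f g : L0 μ}
    (H : ∀ n, f ≤ g + h n) : f ≤ g := AEEqFun.coeFn_le.1 <| by
  filter_upwards [hh, ae_all_iff.2 fun n => AEEqFun.coeFn_le.2 (H n),
    ae_all_iff.2 fun n => AEEqFun.coeFn_add g (h n)] with x h₁ h₂ h₃
  have hlim : Tendsto (fun n => g x + h n x) atTop (nhds (g x)) := by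
    simpa only [add_zero] using h₁.const_add (g x)
  exact ge_of_tendsto' hlim fun n => (h₂ n).trans_eq (h₃ n)

end TendstoZeroAE

variable [SFinite μ]

theorem dL0_zero_right (f : L0 μ) : dL0 μ f 0 = ∫ x, min |f x| 1 ∂μ.toFinite := by
  refine integral_congr_ae ?_
  rw [Filter.EventuallyEq, ae_toFinite]
  filter_upwards [AEEqFun.coeFn_zero (μ := μ) (β := ℝ)] with x hx
  rw [hx, Pi.zero_apply, sub_zero]

theorem integrable_min_abs_one (f : L0 μ) : Integrable (fun x => min |f x| 1) μ.toFinite := by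
  have hf := f.stronglyMeasurable.measurable
  refine Integrable.of_bound (C := 1) (Measurable.aestronglyMeasurable (by fun_prop)) ?_
  refine Eventually.of_forall fun x => ?_
  rw [Real.norm_of_nonneg (by positivity)]
  exact min_le_right _ _

theorem dL0_zero_right_nonneg (f : L0 μ) : 0 ≤ dL0 μ f 0 := by
  rw [dL0_zero_right]
  exact integral_nonneg fun x => by positivity

theorem min_add_one_le {a b c : ℝ} (hb : 0 ≤ b) (hc : 0 ≤ c) (h : a ≤ b + c) :
    min a 1 ≤ min b 1 + min c 1 := by
  rcases min_cases b 1 with ⟨hb', -⟩ | ⟨hb', -⟩ <;>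
    rcases min_cases c 1 with ⟨hc', -⟩ | ⟨hc', -⟩ <;>
    rw [hb', hc'] <;> linarith [min_le_left a 1, min_le_right a 1]

theorem dL0_zero_right_le_add {f g h : L0 μ} (H : |f| ≤ |g| + |h|) :
    dL0 μ f 0 ≤ dL0 μ g 0 + dL0 μ h 0 := by
  simp only [dL0_zero_right]
  rw [← integral_add (integrable_min_abs_one g) (integrable_min_abs_one h)]
  refine integral_mono_ae (integrable_min_abs_one f)
    ((integrable_min_abs_one g).add (integrable_min_abs_one h)) ?_
  rw [Filter.EventuallyLE, ae_toFinite]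
  filter_upwards [AEEqFun.coeFn_le.2 H, AEEqFun.coeFn_add |g| |h|, AEEqFun.coeFn_abs f,
    AEEqFun.coeFn_abs g, AEEqFun.coeFn_abs h] with x hle hadd hf hg hh
  rw [hadd, Pi.add_apply, hf, hg, hh] at hle
  exact min_add_one_le (abs_nonneg _) (abs_nonneg _) hle

theorem TendstoZeroAE.tendsto_dL0 {h : ℕ → L0 μ} (hh : TendstoZeroAE h) :
    Tendsto (fun n => dL0 μ (h n) 0) atTop (nhds 0) := by
  simp only [dL0_zero_right]
  rw [← integral_zero X ℝ (μ := μ.toFinite)]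
  refine tendsto_integral_of_dominated_convergence (fun _ => 1)
    (fun n => (integrable_min_abs_one (h n)).aestronglyMeasurable) (integrable_const _) ?_ ?_
  · intro n
    refine Eventually.of_forall fun x => ?_
    rw [Real.norm_of_nonneg (by positivity)]
    exact min_le_right _ _
  · rw [ae_toFinite]
    filter_upwards [hh] with x hx
    simpa using hx.abs.min (tendsto_const_nhds (x := (1 : ℝ)))

theorem ae_summable_abs_of_summable_dL0 {h : ℕ → L0 μ} (H : Summable fun n => dL0 μ (h n) 0) :
    ∀ᵐ x ∂μ, Summable fun n => |h n x| := by
  have hnorm : ∀ (n : ℕ) (x : X), ‖min |h n x| 1‖ = min |h n x| 1 := fun n x =>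
    Real.norm_of_nonneg (by positivity)
  have hL1 : ∀ n, eLpNorm (fun x => min |h n x| 1) 1 μ.toFinite =
      ENNReal.ofReal (dL0 μ (h n) 0) := fun n => by
    rw [eLpNorm_one_eq_lintegral_enorm,
      ← ofReal_integral_norm_eq_lintegral_enorm (integrable_min_abs_one (h n)), dL0_zero_right]
    simp only [hnorm]
  have htrunc := summable_norm_of_tsum_eLpNorm_ne_top le_rfl
    (fun n => (integrable_min_abs_one (h n)).aestronglyMeasurable)
    (by simpa only [hL1] using H.tsum_ofReal_ne_top)
  rw [ae_toFinite] at htrunc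
  filter_upwards [htrunc] with x hx
  simp only [hnorm] at hx
  have hlt : ∀ᶠ n in atTop, min |h n x| 1 < 1 :=
    hx.tendsto_atTop_zero.eventually_lt_const one_pos
  refine hx.congr_atTop (hlt.mono fun n hn => min_eq_left ?_)
  exact (min_lt_iff.1 hn).elim le_of_lt fun h => (lt_irrefl _ h).elim

theorem exists_tendstoZeroAE_of_forall_lt_dL0 {s : Set (L0 μ)}
    (hs : ∀ ε : ℝ, 0 < ε → ∃ f ∈ s, dL0 μ f 0 < ε) :
    ∃ h : ℕ → L0 μ, (∀ n, h n ∈ s) ∧ TendstoZeroAE h := by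
  choose h h_mem h_lt using fun n : ℕ => hs ((1 / 2) ^ n) (by positivity)
  refine ⟨h, h_mem, ?_⟩
  have hsum : Summable fun n => dL0 μ (h n) 0 :=
    summable_geometric_two.of_nonneg_of_le (fun n => dL0_zero_right_nonneg _) fun n => (h_lt n).le
  filter_upwards [ae_summable_abs_of_summable_dL0 hsum] with x hx
  exact (tendsto_zero_iff_abs_tendsto_zero _).2 hx.tendsto_atTop_zero

end Convergence

/-! ### Pointwise seminorms and Banach modules -/

/-- An `L⁰`-valued seminorm on a module over a ring `R` whose scalars act through a ring
homomorphism `σ : R → L⁰`. With `σ` the identity it covers the pointwise norms of Banach modules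
over `μ`, with `σ f = f ∘ φ` the functions `v ↦ |v| ∘ φ`. -/
structure IsPointwiseSeminorm {μ : Measure X} {R A : Type*} [Ring R] [AddCommGroup A] [Module R A]
    (σ : R →+* L0 μ) (a : A → L0 μ) : Prop where
  add_le : ∀ u v, a (u + v) ≤ a u + a v
  map_smul : ∀ (r : R) (u : A), a (r • u) = |σ r| * a u

namespace IsPointwiseSeminorm

variable {μ : Measure X} {R A : Type*} [Ring R] [AddCommGroup A] [Module R A] {σ : R →+* L0 μ}
  {a : A → L0 μ}

theorem map_zero (ha : IsPointwiseSeminorm σ a) : a 0 = 0 := by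
  simpa only [zero_smul, _root_.map_zero, abs_zero, zero_mul] using ha.map_smul 0 0

theorem map_neg (ha : IsPointwiseSeminorm σ a) (u : A) : a (-u) = a u := by
  simpa only [neg_smul, one_smul, _root_.map_neg, _root_.map_one, abs_neg,
    abs_of_nonneg (zero_le_one (α := L0 μ)), one_mul] using ha.map_smul (-1) u

theorem nonneg (ha : IsPointwiseSeminorm σ a) (u : A) : 0 ≤ a u := by
  refine nsmul_two_semiclosed ?_
  simpa only [add_neg_cancel, ha.map_zero, ha.map_neg, two_nsmul] using ha.add_le u (-u)

theorem sub_le_add (ha : IsPointwiseSeminorm σ a) (u v : A) : a (u - v) ≤ a u + a v := by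
  simpa only [sub_eq_add_neg, ha.map_neg] using ha.add_le u (-v)

theorem map_sub_rev (ha : IsPointwiseSeminorm σ a) (u v : A) : a (u - v) = a (v - u) := by
  rw [← neg_sub, ha.map_neg]

theorem sub_le_sub_add_sub (ha : IsPointwiseSeminorm σ a) (u v w : A) :
    a (u - w) ≤ a (u - v) + a (v - w) := by
  simpa only [sub_add_sub_cancel] using ha.add_le (u - v) (v - w)

theorem le_add_map_sub (ha : IsPointwiseSeminorm σ a) (u v : A) : a u ≤ a v + a (u - v) := by
  simpa only [add_sub_cancel] using ha.add_le v (u - v)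

theorem sum_le (ha : IsPointwiseSeminorm σ a) {ι : Type*} (s : Finset ι) (u : ι → A) :
    a (∑ i ∈ s, u i) ≤ ∑ i ∈ s, a (u i) :=
  Finset.le_sum_of_subadditive a ha.map_zero.le ha.add_le s u

theorem comp (ha : IsPointwiseSeminorm σ a) {S B : Type*} [Ring S] [AddCommGroup B] [Module S B]
    {τ : S →+* R} (T : B →ₛₗ[τ] A) : IsPointwiseSeminorm (σ.comp τ) fun u => a (T u) where
  add_le u v := by simpa only [map_add] using ha.add_le (T u) (T v)
  map_smul r u := by simp only [map_smulₛₗ, ha.map_smul, RingHom.comp_apply]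

theorem const_mul (ha : IsPointwiseSeminorm σ a) {g : L0 μ} (hg : 0 ≤ g) :
    IsPointwiseSeminorm σ fun u => g * a u where
  add_le u v := (mul_le_mul_of_nonneg_left (ha.add_le u v) hg).trans_eq (mul_add _ _ _)
  map_smul r u := by rw [ha.map_smul, mul_left_comm]

end IsPointwiseSeminorm

section BanachModules

variable {μ : Measure X} [SFinite μ] {M : Type*} [AddCommGroup M] [Module (L0 μ) M] [BanachMod μ M]

theorem isPointwiseSeminorm_pn :
    IsPointwiseSeminorm (RingHom.id (L0 μ)) (pn μ : M → L0 μ) where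
  add_le := BanachMod.pn_add_le
  map_smul := BanachMod.pn_smul

theorem pn_smul (f : L0 μ) (v : M) : pn μ (f • v) = |f| * pn μ v := BanachMod.pn_smul f v

theorem pn_eq_zero {v : M} : pn μ v = 0 ↔ v = 0 := BanachMod.pn_eq_zero v

theorem eq_zero_of_pn_le_zero {v : M} (hv : pn μ v ≤ 0) : v = 0 :=
  pn_eq_zero.1 (hv.antisymm (isPointwiseSeminorm_pn.nonneg v))

theorem tendsto_dL0_add_pn_sub {u : ℕ → M} {v : M} {h : ℕ → L0 μ} (hh : TendstoZeroAE h)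
    (hu : Tendsto (fun n => dL0 μ (pn μ (u n - v)) 0) atTop (nhds 0)) :
    Tendsto (fun n => dL0 μ (h n + pn μ (u n - v)) 0) atTop (nhds 0) := by
  refine squeeze_zero (fun n => dL0_zero_right_nonneg _)
    (fun n => dL0_zero_right_le_add (abs_add_le _ _)) ?_
  simpa only [add_zero] using hh.tendsto_dL0.add hu

theorem exists_forall_pn_sub_le {u : ℕ → M} {h : ℕ → L0 μ} (hh : TendstoZeroAE h)
    (hu : ∀ m n, pn μ (u m - u n) ≤ h m + h n) : ∃ v : M, ∀ n, pn μ (u n - v) ≤ h n := by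
  have hpn := isPointwiseSeminorm_pn (μ := μ) (M := M)
  have h_nonneg : ∀ n, 0 ≤ h n := fun n => nsmul_two_semiclosed <| by
    simpa only [sub_self, hpn.map_zero, two_nsmul] using hu n n
  obtain ⟨v, hv⟩ : ∃ v : M, Tendsto (fun n => dL0 μ (pn μ (u n - v)) 0) atTop (nhds 0) := by
    refine BanachMod.complete u fun ε hε => ?_
    obtain ⟨N, hN⟩ := eventually_atTop.1 (hh.tendsto_dL0.eventually_lt_const (half_pos hε))
    refine ⟨N, fun m hm n hn => ?_⟩
    have hle : |pn μ (u m - u n)| ≤ |h m| + |h n| := by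
      simpa only [abs_of_nonneg, h_nonneg, hpn.nonneg] using hu m n
    change dL0 μ (pn μ (u m - u n)) 0 < ε
    linarith [dL0_zero_right_le_add hle, hN m hm, hN n hn]
  obtain ⟨k, hk_mem, hk⟩ := exists_tendstoZeroAE_of_forall_lt_dL0
    (s := range fun n => h n + pn μ (u n - v)) fun ε hε => by
      obtain ⟨n, hn⟩ := ((tendsto_dL0_add_pn_sub hh hv).eventually_lt_const hε).exists
      exact ⟨_, mem_range_self n, hn⟩
  refine ⟨v, fun n => hk.le_of_forall_le_add fun j => ?_⟩
  obtain ⟨m, hm⟩ := hk_mem j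
  calc pn μ (u n - v) ≤ pn μ (u n - u m) + pn μ (u m - v) := hpn.sub_le_sub_add_sub _ _ _
    _ ≤ h n + h m + pn μ (u m - v) := add_le_add_left (hu n m) _
    _ = h n + k j := by rw [add_assoc, ← hm]

end BanachModules

/-! ### `L⁰` as a Banach module over itself -/

namespace L0

variable {μ : Measure X}

theorem exists_ae_tendsto {u : ℕ → L0 μ} (hu : ∀ᵐ x ∂μ, CauchySeq fun n => u n x) :
    ∃ f : L0 μ, ∀ᵐ x ∂μ, Tendsto (fun n => u n x) atTop (nhds (f x)) := by
  obtain ⟨f, hf, hlim⟩ := exists_stronglyMeasurable_limit_of_tendsto_ae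
    (fun n => (u n).aestronglyMeasurable) (hu.mono fun _ => cauchySeq_tendsto_of_complete)
  refine ⟨AEEqFun.mk f hf.aestronglyMeasurable, ?_⟩
  filter_upwards [hlim, AEEqFun.coeFn_mk f hf.aestronglyMeasurable] with x hx hfx
  rwa [hfx]

variable [SFinite μ]

theorem exists_subseq_tendstoZeroAE_sub {u : ℕ → L0 μ}
    (hu : ∀ ε : ℝ, 0 < ε → ∃ N : ℕ, ∀ m ≥ N, ∀ n ≥ N, dL0 μ (u m - u n) 0 < ε) :
    ∃ (f : L0 μ) (s : ℕ → ℕ), StrictMono s ∧ TendstoZeroAE fun k => u (s k) - f := by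
  obtain ⟨s, hs_mono, hs⟩ := extraction_forall_of_eventually'
    (P := fun k N => ∀ m ≥ N, dL0 μ (u m - u N) 0 < (1 / 2) ^ k) fun k =>
      (hu ((1 / 2) ^ k) (by positivity)).imp fun N hN n hn m hm => hN m (hn.trans hm) n hn
  have hsum : Summable fun k => dL0 μ (u (s (k + 1)) - u (s k)) 0 :=
    summable_geometric_two.of_nonneg_of_le (fun k => dL0_zero_right_nonneg _) fun k =>
      (hs k _ (hs_mono.monotone k.le_succ)).le
  obtain ⟨f, hf⟩ := exists_ae_tendsto (u := u ∘ s) <| by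
    filter_upwards [ae_summable_abs_of_summable_dL0 hsum,
      ae_all_iff.2 fun k => AEEqFun.coeFn_sub (u (s (k + 1))) (u (s k))] with x hx hsub
    refine cauchySeq_of_summable_dist (hx.congr fun k => ?_)
    rw [hsub, Pi.sub_apply, dist_comm, Real.dist_eq, Function.comp_apply, Function.comp_apply]
  refine ⟨f, s, hs_mono, ?_⟩
  filter_upwards [hf, ae_all_iff.2 fun k => AEEqFun.coeFn_sub (u (s k)) f] with x hx hsub
  simpa only [hsub, Pi.sub_apply, Function.comp_apply, sub_self] using hx.sub_const (f x)

theorem exists_tendsto_dL0_sub {u : ℕ → L0 μ}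
    (hu : ∀ ε : ℝ, 0 < ε → ∃ N : ℕ, ∀ m ≥ N, ∀ n ≥ N, dL0 μ (u m - u n) 0 < ε) :
    ∃ f : L0 μ, Tendsto (fun n => dL0 μ (u n - f) 0) atTop (nhds 0) := by
  obtain ⟨f, s, hs_mono, hs⟩ := exists_subseq_tendstoZeroAE_sub hu
  refine ⟨f, Metric.tendsto_atTop.2 fun ε hε => ?_⟩
  obtain ⟨N, hN⟩ := hu (ε / 2) (half_pos hε)
  obtain ⟨k, hk, hkN⟩ := ((hs.tendsto_dL0.eventually_lt_const (half_pos hε)).and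
    (hs_mono.tendsto_atTop.eventually_ge_atTop N)).exists
  refine ⟨N, fun n hn => ?_⟩
  have htri : |u n - f| ≤ |u n - u (s k)| + |u (s k) - f| := by
    simpa only [sub_add_sub_cancel] using abs_add_le (u n - u (s k)) (u (s k) - f)
  rw [Real.dist_0_eq_abs, abs_of_nonneg (dL0_zero_right_nonneg _)]
  linarith [dL0_zero_right_le_add htri, hN n hn (s k) hkN]

theorem dL0_abs (f : L0 μ) : dL0 μ |f| 0 = dL0 μ f 0 := by
  simp only [dL0_zero_right]
  refine integral_congr_ae ?_
  rw [Filter.EventuallyEq, ae_toFinite]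
  filter_upwards [AEEqFun.coeFn_abs f] with x hx
  rw [hx, abs_abs]

instance : BanachMod μ (L0 μ) where
  pn f := |f|
  pn_nonneg := abs_nonneg
  pn_eq_zero _ := abs_eq_zero
  pn_add_le := abs_add_le
  pn_smul := abs_mul
  complete u hu := by
    simp only [dL0_abs] at hu ⊢
    exact exists_tendsto_dL0_sub hu

end L0

/-! ### Order completeness of `L⁰` -/

namespace L0

section OrderCompleteness

variable {μ : Measure X}

theorem exists_ae_isGLB_range {g : ℕ → L0 μ} (hg : BddBelow (range g)) :
    ∃ s : L0 μ, ∀ᵐ x ∂μ, IsGLB (range fun n => g n x) (s x) := by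
  obtain ⟨l, hl⟩ := hg
  have hmeas : AEStronglyMeasurable (fun x => ⨅ n, g n x) μ :=
    (Measurable.iInf fun n => (g n).stronglyMeasurable.measurable).aestronglyMeasurable
  refine ⟨AEEqFun.mk _ hmeas, ?_⟩
  filter_upwards [AEEqFun.coeFn_mk _ hmeas,
    ae_all_iff.2 fun n => AEEqFun.coeFn_le.2 (hl (mem_range_self n))] with x hx hlx
  rw [hx]
  exact isGLB_ciInf ⟨l x, forall_mem_range.2 hlx⟩

variable [SFinite μ]

/-- The integral of `arctan ∘ f` for a finite measure equivalent to `μ`: a bounded, strictly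
increasing functional on all of `L⁰`, which detects infima. -/
def arctanIntegral (f : L0 μ) : ℝ := ∫ x, Real.arctan (f x) ∂μ.toFinite

theorem integrable_arctan (f : L0 μ) : Integrable (fun x => Real.arctan (f x)) μ.toFinite := by
  have hf := f.stronglyMeasurable.measurable
  refine Integrable.of_bound (C := Real.pi / 2) (Measurable.aestronglyMeasurable (by fun_prop)) ?_
  exact Eventually.of_forall fun x =>
    abs_le.2 ⟨(Real.neg_pi_div_two_lt_arctan _).le, (Real.arctan_lt_pi_div_two _).le⟩

theorem bddBelow_range_arctanIntegral : BddBelow (range (arctanIntegral (μ := μ))) :=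
  ⟨∫ _, -(Real.pi / 2) ∂μ.toFinite, forall_mem_range.2 fun f =>
    integral_mono (integrable_const _) (integrable_arctan f) fun _ =>
      (Real.neg_pi_div_two_lt_arctan _).le⟩

theorem le_of_arctanIntegral_le {f g : L0 μ} (hfg : f ≤ g)
    (h : arctanIntegral g ≤ arctanIntegral f) : g ≤ f := by
  have hle : (fun x => Real.arctan (f x)) ≤ᵐ[μ.toFinite] fun x => Real.arctan (g x) := by
    rw [Filter.EventuallyLE, ae_toFinite]
    exact (AEEqFun.coeFn_le.2 hfg).mono fun x hx => Real.arctan_strictMono.monotone hx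
  have heq := (integral_eq_iff_of_ae_le (integrable_arctan f) (integrable_arctan g) hle).1
    (le_antisymm (integral_mono_ae (integrable_arctan f) (integrable_arctan g) hle) h)
  rw [Filter.EventuallyEq, ae_toFinite] at heq
  exact AEEqFun.coeFn_le.1 (heq.mono fun x hx => (Real.arctan_injective hx).ge)

theorem arctanIntegral_add_inf_le {l g : L0 μ} (hlg : l ≤ g) (f : L0 μ) :
    arctanIntegral l + arctanIntegral (g ⊓ f) ≤ arctanIntegral g + arctanIntegral (l ⊓ f) := by
  simp only [arctanIntegral]
  rw [← integral_add (integrable_arctan _) (integrable_arctan _),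
    ← integral_add (integrable_arctan _) (integrable_arctan _)]
  refine integral_mono_ae ((integrable_arctan _).add (integrable_arctan _))
    ((integrable_arctan _).add (integrable_arctan _)) ?_
  rw [Filter.EventuallyLE, ae_toFinite]
  filter_upwards [AEEqFun.coeFn_le.2 hlg, AEEqFun.coeFn_inf g f, AEEqFun.coeFn_inf l f]
    with x hle hg hl
  rw [hg, hl]
  have hmono := Real.arctan_strictMono.monotone
  rcases le_total (g x) (f x) with h | h
  · rw [inf_eq_left.2 h, inf_eq_left.2 (hle.trans h), add_comm]
  · rw [inf_eq_right.2 h]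
    rcases le_total (l x) (f x) with h' | h'
    · rw [inf_eq_left.2 h', add_comm]
      exact add_le_add_left (hmono h) _
    · rw [inf_eq_right.2 h']
      exact add_le_add_left (hmono hle) _

theorem exists_seq_mem_lowerBounds {S : Set (L0 μ)} (hne : S.Nonempty) (hS : InfClosed S) :
    ∃ g : ℕ → L0 μ, (∀ n, g n ∈ S) ∧ lowerBounds (range g) ⊆ lowerBounds S := by
  have hbdd : BddBelow (arctanIntegral '' S) :=
    bddBelow_range_arctanIntegral.mono (image_subset_range _ _)
  have hex : ∀ n : ℕ, ∃ f ∈ S, arctanIntegral f < sInf (arctanIntegral '' S) + 1 / (n + 1) := by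
    intro n
    obtain ⟨_, ⟨f, hf, rfl⟩, hlt⟩ := exists_lt_of_csInf_lt (hne.image arctanIntegral)
      (lt_add_of_pos_right (sInf (arctanIntegral '' S)) (Nat.one_div_pos_of_nat (n := n)))
    exact ⟨f, hf, hlt⟩
  choose g hgS hg using hex
  refine ⟨g, hgS, fun l hl f hf => ?_⟩
  have hgap : ∀ n : ℕ, arctanIntegral l - arctanIntegral (l ⊓ f) ≤ 1 / (n + 1) := fun n => by
    have hinf := csInf_le hbdd (mem_image_of_mem _ (hS (hgS n) hf))
    linarith [arctanIntegral_add_inf_le (hl (mem_range_self n)) f, hg n]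
  have hle : arctanIntegral l ≤ arctanIntegral (l ⊓ f) :=
    sub_nonpos.1 (ge_of_tendsto' tendsto_one_div_add_atTop_nhds_zero_nat hgap)
  exact (le_of_arctanIntegral_le inf_le_left hle).trans inf_le_right

theorem exists_seq_ae_isGLB {S : Set (L0 μ)} (hne : S.Nonempty) (hS : InfClosed S)
    (hbdd : BddBelow S) :
    ∃ (g : ℕ → L0 μ) (s : L0 μ), (∀ n, g n ∈ S) ∧ IsGLB S s ∧
      ∀ᵐ x ∂μ, IsGLB (range fun n => g n x) (s x) := by
  obtain ⟨g, hgS, hg⟩ := exists_seq_mem_lowerBounds hne hS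
  obtain ⟨s, hs⟩ := exists_ae_isGLB_range (hbdd.mono (range_subset_iff.2 hgS))
  refine ⟨g, s, hgS, ⟨hg ?_, fun l hl => ?_⟩, hs⟩
  · refine forall_mem_range.2 fun n => AEEqFun.coeFn_le.1 ?_
    filter_upwards [hs] with x hx using hx.1 (mem_range_self n)
  · refine AEEqFun.coeFn_le.1 ?_
    filter_upwards [hs, ae_all_iff.2 fun n => AEEqFun.coeFn_le.2 (hl (hgS n))] with x hx hlx
    exact hx.2 (forall_mem_range.2 hlx)

theorem exists_isGLB {S : Set (L0 μ)} (hne : S.Nonempty) (hbdd : BddBelow S) :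
    ∃ s, IsGLB S s := by
  have hbdd' : BddBelow (infClosure S) := by rwa [BddBelow, lowerBounds_infClosure]
  obtain ⟨-, s, -, hs, -⟩ :=
    exists_seq_ae_isGLB (hne.mono subset_infClosure) infClosed_infClosure hbdd'
  exact ⟨s, isGLB_infClosure.1 hs⟩

end OrderCompleteness

end L0

/-! ### Composition with `φ` -/

section Pull

variable {Y : Type*} [MeasurableSpace Y] {μ : Measure X} {ν : Measure Y} {φ : X → Y}
  (hφ : Measure.QuasiMeasurePreserving φ μ ν)

theorem coeFn_pullL0 (f : L0 ν) : ⇑(pullL0 hφ f) =ᵐ[μ] fun x => f (φ x) :=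
  AEEqFun.coeFn_compQuasiMeasurePreserving f hφ

/-- Composition with `φ` as a ring homomorphism, along which maps between modules over `L⁰(𝕐)`
and `L⁰(𝕏)` are semilinear. -/
def pullHom : L0 ν →+* L0 μ where
  toFun := pullL0 hφ
  map_one' := rfl
  map_mul' f g := AEEqFun.induction_on₂ f g fun _ _ _ _ => rfl
  map_zero' := rfl
  map_add' f g := AEEqFun.induction_on₂ f g fun _ _ _ _ => rfl

theorem pullHom_apply (f : L0 ν) : pullHom hφ f = pullL0 hφ f := rfl

theorem pullHom_const (c : ℝ) : pullHom hφ (L0.const ν c) = L0.const μ c := rfl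

theorem pullL0_abs (f : L0 ν) : pullL0 hφ |f| = |pullL0 hφ f| :=
  AEEqFun.induction_on f fun _ _ => rfl

theorem pullL0_inf (f g : L0 ν) : pullL0 hφ (f ⊓ g) = pullL0 hφ f ⊓ pullL0 hφ g :=
  AEEqFun.induction_on₂ f g fun _ _ _ _ => rfl

theorem pullL0_mono : Monotone (pullL0 hφ) := fun f g hfg => by
  rw [← inf_eq_left] at hfg ⊢
  rw [← pullL0_inf, hfg]

theorem TendstoZeroAE.pullL0 {h : ℕ → L0 ν} (hh : TendstoZeroAE h) :
    TendstoZeroAE fun n => pullL0 hφ (h n) := by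
  filter_upwards [hφ.ae hh, ae_all_iff.2 fun n => coeFn_pullL0 hφ (h n)] with x hx hpull
  simpa only [hpull] using hx

/-- An infimum in `L⁰` is the pointwise infimum of a sequence of finite infima, and both pointwise
and finite infima commute with `φ`. -/
theorem le_pullL0_of_isGLB [SFinite ν] {S : Set (L0 ν)} {s : L0 ν} (hne : S.Nonempty)
    (hs : IsGLB S s) {t : L0 μ} (ht : ∀ g ∈ S, t ≤ pullL0 hφ g) : t ≤ pullL0 hφ s := by
  have ht' : ∀ g ∈ infClosure S, t ≤ pullL0 hφ g :=
    infClosure_min (t := {g | t ≤ pullL0 hφ g}) ht fun f hf g hg =>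
      (le_inf hf hg).trans_eq (pullL0_inf hφ f g).symm
  have hs' : IsGLB (infClosure S) s := isGLB_infClosure.2 hs
  obtain ⟨g, s', hgS, hs'', hae⟩ :=
    L0.exists_seq_ae_isGLB (hne.mono subset_infClosure) infClosed_infClosure ⟨s, hs'.1⟩
  obtain rfl : s = s' := hs'.unique hs''
  refine AEEqFun.coeFn_le.1 ?_
  filter_upwards [hφ.ae hae, coeFn_pullL0 hφ s, ae_all_iff.2 fun n => coeFn_pullL0 hφ (g n),
    ae_all_iff.2 fun n => AEEqFun.coeFn_le.2 (ht' _ (hgS n))] with x hglb hsx hgx htx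
  rw [hsx]
  exact hglb.2 (forall_mem_range.2 fun n => (htx n).trans_eq (hgx n))

end Pull

/-! ### Approximation by rational scalars -/

section RationalApproximation

variable {μ : Measure X} {ι : Type*}

theorem L0.le_of_forall_rat [Fintype ι] {F G : L0 μ} (f e : ι → L0 μ)
    (h : ∀ r : ι → ℚ, F ≤ G + ∑ i, |f i - L0.const μ (r i)| * e i) : F ≤ G := by
  have heval : ∀ᵐ x ∂μ, ∀ r : ι → ℚ, F x ≤ G x + ∑ i, |f i x - r i| * e i x := by
    refine ae_all_iff.2 fun r => ?_
    have hterm : ∀ᵐ x ∂μ, ∀ i, (|f i - L0.const μ (r i)| * e i) x = |f i x - r i| * e i x := by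
      refine ae_all_iff.2 fun i => ?_
      filter_upwards [AEEqFun.coeFn_mul |f i - L0.const μ (r i)| (e i),
        AEEqFun.coeFn_abs (f i - L0.const μ (r i)), AEEqFun.coeFn_sub (f i) (L0.const μ (r i)),
        L0.coeFn_const (μ := μ) (r i)] with x h₁ h₂ h₃ h₄
      rw [h₁, Pi.mul_apply, h₂, h₃, Pi.sub_apply, h₄]
    filter_upwards [AEEqFun.coeFn_le.2 (h r), hterm,
      AEEqFun.coeFn_add G (∑ i, |f i - L0.const μ (r i)| * e i),
      AEEqFun.coeFn_fun_finsetSum Finset.univ fun i => |f i - L0.const μ (r i)| * e i]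
      with x hle hterm hadd hsum
    simpa only [hadd, Pi.add_apply, hsum, hterm] using hle
  refine AEEqFun.coeFn_le.1 (heval.mono fun x hx => ?_)
  have hdense : DenseRange fun (r : ι → ℚ) i => (r i : ℝ) :=
    DenseRange.piMap fun _ => Rat.denseRange_cast
  have hreal : ∀ c : ι → ℝ, F x ≤ G x + ∑ i, |f i x - c i| * e i x := fun c =>
    hdense.induction_on c (isClosed_le continuous_const (by fun_prop)) hx
  simpa only [sub_self, abs_zero, zero_mul, Finset.sum_const_zero, add_zero]
    using hreal fun i => f i x

theorem IsPointwiseSeminorm.pi_le_sum [Fintype ι] [DecidableEq ι] {p : (ι → L0 μ) → L0 μ}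
    (hp : IsPointwiseSeminorm (RingHom.id (L0 μ)) p) (f : ι → L0 μ) :
    p f ≤ ∑ i, |f i| * p (Pi.single i 1) := by
  calc p f = p (∑ i, f i • Pi.single i 1) := by rw [← pi_eq_sum_univ' f]
    _ ≤ ∑ i, p (f i • Pi.single i 1) := hp.sum_le _ _
    _ = ∑ i, |f i| * p (Pi.single i 1) :=
      Finset.sum_congr rfl fun i _ => hp.map_smul (f i) (Pi.single i 1)

theorem IsPointwiseSeminorm.le_of_forall_rat [Finite ι] {p q : (ι → L0 μ) → L0 μ}
    (hp : IsPointwiseSeminorm (RingHom.id (L0 μ)) p)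
    (hq : IsPointwiseSeminorm (RingHom.id (L0 μ)) q)
    (h : ∀ r : ι → ℚ, p (fun i => L0.const μ (r i)) ≤ q fun i => L0.const μ (r i))
    (f : ι → L0 μ) : p f ≤ q f := by
  classical
  cases nonempty_fintype ι
  refine L0.le_of_forall_rat f (fun i => q (Pi.single i 1) + p (Pi.single i 1)) fun r => ?_
  set c : ι → L0 μ := fun i => L0.const μ (r i)
  calc p f ≤ p c + p (f - c) := hp.le_add_map_sub f c
    _ ≤ q f + q (f - c) + p (f - c) := by
      refine add_le_add_left ((h r).trans ?_) _
      rw [hq.map_sub_rev]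
      exact hq.le_add_map_sub c f
    _ ≤ q f + ((∑ i, |f i - c i| * q (Pi.single i 1)) + ∑ i, |f i - c i| * p (Pi.single i 1)) := by
      rw [add_assoc]
      exact add_le_add_right (add_le_add (hq.pi_le_sum _) (hp.pi_le_sum _)) _
    _ = q f + ∑ i, |f i - c i| * (q (Pi.single i 1) + p (Pi.single i 1)) := by
      simp only [mul_add, Finset.sum_add_distrib]

end RationalApproximation

/-! ### The Hahn–Banach theorem over `L⁰` -/

section HahnBanach

variable {μ : Measure X} {M : Type*} [AddCommGroup M] [Module (L0 μ) M] {p : M → L0 μ}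

/-- The graph `G` of a partially defined `L⁰`-linear functional on `M` that is dominated by `p`;
for a pointwise seminorm `p`, domination makes the submodule `G` single-valued. -/
def IsDominatedGraph (p : M → L0 μ) (G : Submodule (L0 μ) (M × L0 μ)) : Prop :=
  ∀ q ∈ G, q.2 ≤ p q.1

namespace IsDominatedGraph

variable {G : Submodule (L0 μ) (M × L0 μ)}

theorem exists_add_le_and_sub_le [SFinite μ] (hG : IsDominatedGraph p G)
    (hp : IsPointwiseSeminorm (RingHom.id (L0 μ)) p) (z : M) :
    ∃ c : L0 μ, ∀ q ∈ G, q.2 + c ≤ p (q.1 + z) ∧ q.2 - c ≤ p (q.1 - z) := by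
  have hcross : ∀ q ∈ G, ∀ q' ∈ G, q.2 - p (q.1 - z) ≤ p (q'.1 + z) - q'.2 := by
    intro q hq q' hq'
    rw [sub_le_iff_le_add, sub_add_eq_add_sub, le_sub_iff_add_le]
    calc q.2 + q'.2 ≤ p (q.1 + q'.1) := hG _ (G.add_mem hq hq')
      _ = p ((q'.1 + z) + (q.1 - z)) := by congr 1; abel
      _ ≤ p (q'.1 + z) + p (q.1 - z) := hp.add_le _ _
  obtain ⟨c, hc⟩ := L0.exists_isGLB (S := (fun q => p (q.1 + z) - q.2) '' (G : Set (M × L0 μ)))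
    ⟨_, mem_image_of_mem _ G.zero_mem⟩
    ⟨_, forall_mem_image.2 fun q' hq' => hcross 0 G.zero_mem q' hq'⟩
  refine ⟨c, fun q hq => ⟨?_, ?_⟩⟩
  · exact le_sub_iff_add_le'.1 (hc.1 (mem_image_of_mem _ hq))
  · exact sub_le_comm.1 (hc.2 (forall_mem_image.2 fun q' hq' => hcross q hq q' hq'))

theorem add_const_mul_le_of_pos (hp : IsPointwiseSeminorm (RingHom.id (L0 μ)) p) {z : M} {c : L0 μ}
    (hc : ∀ q ∈ G, q.2 + c ≤ p (q.1 + z)) {r : ℝ} (hr : 0 < r) {q : M × L0 μ} (hq : q ∈ G) :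
    q.2 + L0.const μ r * c ≤ p (q.1 + L0.const μ r • z) := by
  have hinv : L0.const μ r * L0.const μ r⁻¹ = 1 := by
    rw [← map_mul, mul_inv_cancel₀ hr.ne', map_one]
  calc q.2 + L0.const μ r * c
      = L0.const μ r * (L0.const μ r⁻¹ * q.2 + c) := by
        rw [mul_add, ← mul_assoc, hinv, one_mul]
    _ ≤ L0.const μ r * p (L0.const μ r⁻¹ • q.1 + z) :=
        mul_le_mul_of_nonneg_left (hc _ (G.smul_mem _ hq)) (L0.const_nonneg hr.le)
    _ = p (q.1 + L0.const μ r • z) := by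
        rw [← abs_of_nonneg (L0.const_nonneg (μ := μ) hr.le),
          ← RingHom.id_apply (L0.const μ r), ← hp.map_smul, RingHom.id_apply,
          abs_of_nonneg (L0.const_nonneg hr.le), smul_add, smul_smul, hinv, one_smul]

theorem add_const_mul_le (hG : IsDominatedGraph p G)
    (hp : IsPointwiseSeminorm (RingHom.id (L0 μ)) p) {z : M} {c : L0 μ}
    (hc : ∀ q ∈ G, q.2 + c ≤ p (q.1 + z) ∧ q.2 - c ≤ p (q.1 - z)) (r : ℝ) {q : M × L0 μ}
    (hq : q ∈ G) : q.2 + L0.const μ r * c ≤ p (q.1 + L0.const μ r • z) := by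
  rcases lt_trichotomy r 0 with hr | rfl | hr
  · have hc' : ∀ q ∈ G, q.2 + -c ≤ p (q.1 + -z) := fun q hq => by
      simpa only [← sub_eq_add_neg] using (hc q hq).2
    simpa only [map_neg, neg_mul_neg, neg_smul_neg] using
      add_const_mul_le_of_pos hp hc' (neg_pos.2 hr) hq
  · simpa only [map_zero, zero_mul, zero_smul, add_zero] using hG q hq
  · exact add_const_mul_le_of_pos hp (fun q hq => (hc q hq).1) hr hq

theorem add_mul_le (hG : IsDominatedGraph p G) (hp : IsPointwiseSeminorm (RingHom.id (L0 μ)) p)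
    {z : M} {c : L0 μ} (hc : ∀ q ∈ G, q.2 + c ≤ p (q.1 + z) ∧ q.2 - c ≤ p (q.1 - z)) (f : L0 μ)
    {q : M × L0 μ} (hq : q ∈ G) : q.2 + f * c ≤ p (q.1 + f • z) := by
  refine L0.le_of_forall_rat (fun _ : Unit => f) (fun _ => p z + |c|) fun r => ?_
  rw [Finset.univ_unique, Finset.sum_singleton]
  set s : L0 μ := L0.const μ (r ())
  have hp_sub : p (q.1 + s • z - (q.1 + f • z)) = |f - s| * p z := by
    rw [add_sub_add_left_eq_sub, hp.map_sub_rev, ← sub_smul, hp.map_smul, RingHom.id_apply]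
  have hc_sub : (f - s) * c ≤ |f - s| * |c| := (le_abs_self _).trans_eq (L0.abs_mul _ _)
  calc q.2 + f * c = (q.2 + s * c) + (f - s) * c := by ring
    _ ≤ (p (q.1 + f • z) + |f - s| * p z) + |f - s| * |c| := by
      refine add_le_add ((hG.add_const_mul_le hp hc _ hq).trans ?_) hc_sub
      rw [← hp_sub]
      exact hp.le_add_map_sub _ _
    _ = p (q.1 + f • z) + |f - s| * (p z + |c|) := by ring

theorem eq_of_mem (hG : IsDominatedGraph p G) (hp : IsPointwiseSeminorm (RingHom.id (L0 μ)) p)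
    {v : M} {s t : L0 μ} (hs : (v, s) ∈ G) (ht : (v, t) ∈ G) : s = t := by
  have hle : ∀ {s t : L0 μ}, (v, s) ∈ G → (v, t) ∈ G → s ≤ t := fun hs ht => by
    have hdom := hG _ (G.sub_mem hs ht)
    rwa [Prod.mk_sub_mk, sub_self, hp.map_zero, sub_nonpos] at hdom
  exact le_antisymm (hle hs ht) (hle ht hs)

theorem exists_mem_of_maximal [SFinite μ] (hG : Maximal (IsDominatedGraph p) G)
    (hp : IsPointwiseSeminorm (RingHom.id (L0 μ)) p) (z : M) : ∃ c, (z, c) ∈ G := by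
  obtain ⟨c, hc⟩ := hG.prop.exists_add_le_and_sub_le hp z
  have hdom : IsDominatedGraph p (G ⊔ Submodule.span (L0 μ) {(z, c)}) := by
    intro q hq
    obtain ⟨q', hq', s, hs, rfl⟩ := Submodule.mem_sup.1 hq
    obtain ⟨f, rfl⟩ := Submodule.mem_span_singleton.1 hs
    exact hG.prop.add_mul_le hp hc f hq'
  exact ⟨c, hG.le_of_ge hdom le_sup_left
    (Submodule.mem_sup_right (Submodule.mem_span_singleton_self _))⟩

theorem exists_maximal_ge (hG : IsDominatedGraph p G) :
    ∃ G', G ≤ G' ∧ Maximal (IsDominatedGraph p) G' := by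
  refine zorn_le_nonempty₀ {G | IsDominatedGraph p G} (fun C hC hchain G₁ hG₁ => ?_) G hG
  refine ⟨sSup C, fun q hq => ?_, fun _ => le_sSup⟩
  obtain ⟨G', hG', hqG'⟩ := (Submodule.mem_sSup_of_directed ⟨G₁, hG₁⟩ hchain.directedOn).1 hq
  exact hC hG' q hqG'

end IsDominatedGraph

theorem IsPointwiseSeminorm.exists_dual_vector [SFinite μ]
    (hp : IsPointwiseSeminorm (RingHom.id (L0 μ)) p) (z : M) :
    ∃ ω : M →ₗ[L0 μ] L0 μ, ω z = p z ∧ ∀ v, |ω v| ≤ p v := by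
  have hspan : IsDominatedGraph p (Submodule.span (L0 μ) {(z, p z)}) := by
    intro q hq
    obtain ⟨f, rfl⟩ := Submodule.mem_span_singleton.1 hq
    change f * p z ≤ p (f • z)
    rw [hp.map_smul]
    exact mul_le_mul_of_nonneg_right (le_abs_self f) (hp.nonneg z)
  obtain ⟨G, hspanG, hG⟩ := hspan.exists_maximal_ge
  choose ω hω using IsDominatedGraph.exists_mem_of_maximal hG hp
  have huniq : ∀ {v s}, (v, s) ∈ G → ω v = s := fun hs => hG.prop.eq_of_mem hp (hω _) hs
  refine ⟨⟨⟨ω, fun v w => huniq (G.add_mem (hω v) (hω w))⟩, fun f v =>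
    huniq (G.smul_mem f (hω v))⟩, huniq (hspanG (Submodule.mem_span_singleton_self _)), fun v => ?_⟩
  refine sup_le (hG.prop _ (hω v)) ?_
  rw [← hp.map_neg]
  exact hG.prop _ (G.neg_mem (hω v))

end HahnBanach

/-! ### Extension by density -/

section DenseExtension

variable {μ : Measure X} {A B : Type*} [AddCommGroup A] {a : A → L0 μ} {ι : B → A}

/-- Density of the range of `ι` for the pointwise seminorm `a`, in the sequential form: every point
is the almost everywhere limit of a sequence from the range. -/
def HasAEDenseRange (a : A → L0 μ) (ι : B → A) : Prop :=
  ∀ u, ∃ b : ℕ → B, TendstoZeroAE fun n => a (ι (b n) - u)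

namespace HasAEDenseRange

theorem of_forall_dM_lt [SFinite μ] [Module (L0 μ) A] [BanachMod μ A]
    (h : ∀ u : A, ∀ ε : ℝ, 0 < ε → ∃ b, dM μ (ι b) u < ε) :
    HasAEDenseRange (pn μ : A → L0 μ) ι := fun u => by
  obtain ⟨k, hk_mem, hk⟩ := exists_tendstoZeroAE_of_forall_lt_dL0
    (s := range fun b => pn μ (ι b - u)) fun ε hε => by
      obtain ⟨b, hb⟩ := h u ε hε
      exact ⟨_, mem_range_self b, hb⟩
  choose b hb using hk_mem
  exact ⟨b, by simpa only [hb] using hk⟩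

theorem const_mul (h : HasAEDenseRange a ι) (g : L0 μ) :
    HasAEDenseRange (fun u => g * a u) ι := fun u =>
  (h u).imp fun _ hb => hb.const_mul g

theorem pullL0 {Y : Type*} [MeasurableSpace Y] {ν : Measure Y} {φ : X → Y}
    (hφ : Measure.QuasiMeasurePreserving φ μ ν) {a : A → L0 ν} (h : HasAEDenseRange a ι) :
    HasAEDenseRange (fun u => pullL0 hφ (a u)) ι := fun u =>
  (h u).imp fun _ hb => hb.pullL0 hφ

theorem le_of_forall_le {R S : Type*} [Ring R] [Module R A] [Ring S] [Module S A] {σ : R →+* L0 μ}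
    {τ : S →+* L0 μ} {p q : A → L0 μ} (h : HasAEDenseRange a ι) (hp : IsPointwiseSeminorm σ p)
    (hq : IsPointwiseSeminorm τ q) {g k : L0 μ} (hpa : ∀ u, p u ≤ g * a u)
    (hqa : ∀ u, q u ≤ k * a u) (hpq : ∀ b, p (ι b) ≤ q (ι b)) (u : A) : p u ≤ q u := by
  obtain ⟨b, hb⟩ := h u
  refine (hb.const_mul (k + g)).le_of_forall_le_add fun n => ?_
  calc p u ≤ p (ι (b n)) + p (u - ι (b n)) := hp.le_add_map_sub _ _
    _ = p (ι (b n)) + p (ι (b n) - u) := by rw [hp.map_sub_rev u]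
    _ ≤ q (ι (b n)) + g * a (ι (b n) - u) := add_le_add (hpq _) (hpa _)
    _ ≤ q u + q (ι (b n) - u) + g * a (ι (b n) - u) :=
      add_le_add_left (hq.le_add_map_sub _ _) _
    _ ≤ q u + k * a (ι (b n) - u) + g * a (ι (b n) - u) := by gcongr; exact hqa _
    _ = q u + (k + g) * a (ι (b n) - u) := by rw [add_assoc, ← add_mul]

variable {R Q : Type*} [Ring R] [Module R A] [SFinite μ] [AddCommGroup Q] [Module (L0 μ) Q]
  [BanachMod μ Q] {σ : R →+* L0 μ}

theorem linearMap_ext (h : HasAEDenseRange a ι) {T T' : A →ₛₗ[σ] Q} {g g' : L0 μ}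
    (hT : ∀ u, pn μ (T u) ≤ g * a u) (hT' : ∀ u, pn μ (T' u) ≤ g' * a u)
    (hTT' : ∀ b, T (ι b) = T' (ι b)) : T = T' := by
  have hpn := isPointwiseSeminorm_pn (μ := μ) (M := Q)
  have hsub : ∀ u, pn μ ((T - T') u) ≤ (g + g') * a u := fun u =>
    calc pn μ (T u - T' u) ≤ pn μ (T u) + pn μ (T' u) := hpn.sub_le_add _ _
      _ ≤ g * a u + g' * a u := add_le_add (hT u) (hT' u)
      _ = (g + g') * a u := (add_mul _ _ _).symm
  have hzero : ∀ u, pn μ ((0 : A →ₛₗ[σ] Q) u) ≤ 0 * a u := fun u => by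
    rw [LinearMap.zero_apply, hpn.map_zero, zero_mul]
  refine LinearMap.ext fun u => sub_eq_zero.1 (eq_zero_of_pn_le_zero (μ := μ) ?_)
  simpa only [LinearMap.sub_apply, LinearMap.zero_apply, hpn.map_zero] using
    h.le_of_forall_le (hpn.comp (T - T')) (hpn.comp (0 : A →ₛₗ[σ] Q)) hsub hzero
      (fun b => by rw [LinearMap.sub_apply, hTT', sub_self, LinearMap.zero_apply]) u

end HasAEDenseRange

variable {R Q : Type*} [Ring R] [Module R A] [AddCommGroup B] [Module R B] [SFinite μ]
  [AddCommGroup Q] [Module (L0 μ) Q] [BanachMod μ Q] {σ : R →+* L0 μ} {ι : B →ₗ[R] A}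
  {T : B →ₛₗ[σ] Q}

theorem HasAEDenseRange.exists_forall_pn_map_sub_le (h : HasAEDenseRange a ι)
    (ha : IsPointwiseSeminorm σ a) (hT : ∀ b, pn μ (T b) ≤ a (ι b)) (u : A) :
    ∃ v, ∀ b, pn μ (T b - v) ≤ a (ι b - u) := by
  have hpn := isPointwiseSeminorm_pn (μ := μ) (M := Q)
  have hTsub : ∀ b c, pn μ (T b - T c) ≤ a (ι b - u) + a (ι c - u) := fun b c =>
    calc pn μ (T b - T c) ≤ a (ι b - ι c) := by simpa only [map_sub] using hT (b - c)
      _ ≤ a (ι b - u) + a (u - ι c) := ha.sub_le_sub_add_sub _ _ _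
      _ = a (ι b - u) + a (ι c - u) := by rw [ha.map_sub_rev u]
  obtain ⟨c, hc⟩ := h u
  obtain ⟨v, hv⟩ := exists_forall_pn_sub_le hc fun m n => hTsub (c m) (c n)
  refine ⟨v, fun b => (hc.add hc).le_of_forall_le_add fun n => ?_⟩
  calc pn μ (T b - v) ≤ pn μ (T b - T (c n)) + pn μ (T (c n) - v) := hpn.sub_le_sub_add_sub _ _ _
    _ ≤ a (ι b - u) + a (ι (c n) - u) + a (ι (c n) - u) := add_le_add (hTsub _ _) (hv n)
    _ = a (ι b - u) + (a (ι (c n) - u) + a (ι (c n) - u)) := add_assoc _ _ _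

theorem eq_of_forall_pn_sub_le {h : ℕ → L0 μ} (hh : TendstoZeroAE h) {v w : Q}
    (H : ∀ n, pn μ (v - w) ≤ h n) : v = w :=
  sub_eq_zero.1 <| eq_zero_of_pn_le_zero <| hh.le_of_forall_le_add fun n =>
    (H n).trans_eq (zero_add _).symm

theorem HasAEDenseRange.exists_extension (h : HasAEDenseRange a ι)
    (ha : IsPointwiseSeminorm σ a) (hT : ∀ b, pn μ (T b) ≤ a (ι b)) :
    ∃ T' : A →ₛₗ[σ] Q, (∀ b, T' (ι b) = T b) ∧ ∀ u, pn μ (T' u) ≤ a u := by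
  have hpn := isPointwiseSeminorm_pn (μ := μ) (M := Q)
  choose f hf using h.exists_forall_pn_map_sub_le ha hT
  have hf' : ∀ u b, pn μ (f u - T b) ≤ a (ι b - u) := fun u b =>
    (hpn.map_sub_rev _ _).trans_le (hf u b)
  have hadd : ∀ u v, f (u + v) = f u + f v := fun u v => by
    obtain ⟨b, hb⟩ := h u
    obtain ⟨c, hc⟩ := h v
    refine eq_of_forall_pn_sub_le ((hb.add hc).add (hb.add hc)) fun n => ?_
    calc pn μ (f (u + v) - (f u + f v))
        ≤ pn μ (f (u + v) - T (b n + c n)) + pn μ (T (b n + c n) - (f u + f v)) :=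
          hpn.sub_le_sub_add_sub _ _ _
      _ ≤ _ := add_le_add ((hf' _ _).trans ?_) ?_
    · simpa only [map_add, add_sub_add_comm] using ha.add_le (ι (b n) - u) (ι (c n) - v)
    · rw [map_add, add_sub_add_comm]
      exact (hpn.add_le _ _).trans (add_le_add (hf u (b n)) (hf v (c n)))
  have hsmul : ∀ (r : R) u, f (r • u) = σ r • f u := fun r u => by
    obtain ⟨b, hb⟩ := h u
    refine eq_of_forall_pn_sub_le ((hb.const_mul |σ r|).add (hb.const_mul |σ r|)) fun n => ?_
    calc pn μ (f (r • u) - σ r • f u)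
        ≤ pn μ (f (r • u) - T (r • b n)) + pn μ (T (r • b n) - σ r • f u) :=
          hpn.sub_le_sub_add_sub _ _ _
      _ ≤ _ := add_le_add ((hf' _ _).trans_eq ?_) ?_
    · rw [map_smul, ← smul_sub, ha.map_smul]
    · rw [map_smulₛₗ, ← smul_sub, pn_smul]
      exact mul_le_mul_of_nonneg_left (hf u (b n)) (abs_nonneg _)
  refine ⟨{ toFun := f, map_add' := hadd, map_smul' := hsmul }, fun b => ?_, fun u => ?_⟩
  · refine sub_eq_zero.1 (eq_zero_of_pn_le_zero ((hf' (ι b) b).trans_eq ?_))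
    rw [sub_self, ha.map_zero]
  · change pn μ (f u) ≤ a u
    simpa only [map_zero, sub_zero, zero_sub, ha.map_neg] using hf' u 0

end DenseExtension

/-! ### Closures of submodules -/

section Closure

variable {μ : Measure X} [SFinite μ] {M : Type*} [AddCommGroup M] [Module (L0 μ) M] [BanachMod μ M]

/-- The closure of a submodule of a Banach module, consisting of the almost everywhere limits of
the sequences in the submodule. -/
def aeClosure (D : Submodule (L0 μ) M) : Submodule (L0 μ) M where
  carrier := {u | ∃ d : ℕ → M, (∀ n, d n ∈ D) ∧ TendstoZeroAE fun n => pn μ (d n - u)}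
  zero_mem' := by
    refine ⟨0, fun _ => D.zero_mem, ?_⟩
    simp only [Pi.zero_apply, sub_zero, isPointwiseSeminorm_pn.map_zero, TendstoZeroAE.zero]
  add_mem' := by
    rintro u v ⟨d, hd, hdu⟩ ⟨e, he, hev⟩
    refine ⟨d + e, fun n => D.add_mem (hd n) (he n),
      (hdu.add hev).squeeze (fun n => isPointwiseSeminorm_pn.nonneg _) fun n => ?_⟩
    rw [Pi.add_apply, add_sub_add_comm]
    exact isPointwiseSeminorm_pn.add_le _ _
  smul_mem' f u := by
    rintro ⟨d, hd, hdu⟩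
    refine ⟨fun n => f • d n, fun n => D.smul_mem f (hd n), ?_⟩
    simpa only [← smul_sub, pn_smul] using hdu.const_mul |f|

variable {D : Submodule (L0 μ) M}

theorem le_aeClosure : D ≤ aeClosure D := fun u hu => by
  refine ⟨fun _ => u, fun _ => hu, ?_⟩
  simp only [sub_self, isPointwiseSeminorm_pn.map_zero, TendstoZeroAE.zero]

theorem mem_aeClosure_iff_forall_dM_lt {u : M} :
    u ∈ aeClosure D ↔ ∀ ε : ℝ, 0 < ε → ∃ d ∈ D, dM μ d u < ε := by
  refine ⟨?_, fun h => ?_⟩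
  · rintro ⟨d, hd, hdu⟩ ε hε
    obtain ⟨n, hn⟩ := (hdu.tendsto_dL0.eventually_lt_const hε).exists
    exact ⟨d n, hd n, hn⟩
  · obtain ⟨k, hk_mem, hk⟩ := exists_tendstoZeroAE_of_forall_lt_dL0
      (s := (fun d => pn μ (d - u)) '' D) fun ε hε => by
        obtain ⟨d, hd, hlt⟩ := h ε hε
        exact ⟨_, mem_image_of_mem _ hd, hlt⟩
    choose d hd hdk using hk_mem
    exact ⟨d, hd, by simpa only [hdk] using hk⟩

theorem dM_triangle (u v w : M) : dM μ u w ≤ dM μ u v + dM μ v w := by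
  have hpn := isPointwiseSeminorm_pn (μ := μ) (M := M)
  refine dL0_zero_right_le_add ?_
  simpa only [abs_of_nonneg, hpn.nonneg] using hpn.sub_le_sub_add_sub u v w

theorem aeClosure_le_comap_aeClosure {Q : Type*} [AddCommGroup Q] [Module (L0 μ) Q]
    [BanachMod μ Q] {T : M →ₗ[L0 μ] Q} {g : L0 μ} (hT : ∀ u, pn μ (T u) ≤ g * pn μ u)
    {D' : Submodule (L0 μ) Q} (hD : D ≤ (aeClosure D').comap T) :
    aeClosure D ≤ (aeClosure D').comap T := by
  rintro u ⟨d, hd, hdu⟩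
  refine mem_aeClosure_iff_forall_dM_lt.2 fun ε hε => ?_
  have hTd : TendstoZeroAE fun n => pn μ (T (d n) - T u) :=
    (hdu.const_mul g).squeeze (fun n => isPointwiseSeminorm_pn.nonneg _) fun n => by
      rw [← map_sub]
      exact hT _
  obtain ⟨n, hn⟩ := (hTd.tendsto_dL0.eventually_lt_const (half_pos hε)).exists
  obtain ⟨e, he, hlt⟩ := mem_aeClosure_iff_forall_dM_lt.1 (hD (hd n)) (ε / 2) (half_pos hε)
  exact ⟨e, he, (dM_triangle e (T (d n)) (T u)).trans_lt (add_halves ε ▸ add_lt_add hlt hn)⟩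

end Closure

/-! ### The universal property of the pullback -/

section Pullback

variable {Y : Type*} [MeasurableSpace Y] {μ : Measure X} {ν : Measure Y} {φ : X → Y}
  {hφ : Measure.QuasiMeasurePreserving φ μ ν} {M : Type*} [AddCommGroup M] [Module (L0 ν) M]

theorem fintype_linearCombination_const {Q : Type*} [AddCommGroup Q] [Module (L0 μ) Q]
    (T : M →ₛₗ[pullHom hφ] Q) {ι : Type*} [Fintype ι] (v : ι → M) (r : ι → ℝ) :
    Fintype.linearCombination (L0 μ) (T ∘ v) (fun i => L0.const μ (r i))
      = T (∑ i, L0.const ν (r i) • v i) := by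
  simp only [Fintype.linearCombination_apply, Function.comp_apply, map_sum, map_smulₛₗ,
    pullHom_const]

variable [SFinite ν] [BanachMod ν M]

theorem isPointwiseSeminorm_pullL0_pn :
    IsPointwiseSeminorm (pullHom hφ) fun v : M => pullL0 hφ (pn ν v) where
  add_le u v := (pullL0_mono hφ (isPointwiseSeminorm_pn.add_le u v)).trans_eq
    (map_add (pullHom hφ) _ _)
  map_smul f v := by rw [pn_smul, ← pullHom_apply, map_mul, pullHom_apply, pullL0_abs]; rfl

variable [SFinite μ]
  {Mp : Type*} [AddCommGroup Mp] [Module (L0 μ) Mp] [BanachMod μ Mp] {pb : M → Mp}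
  {Q : Type*} [AddCommGroup Q] [Module (L0 μ) Q] [BanachMod μ Q]

namespace IsPullback

/-- The structure map `v ↦ φ*v` of a pullback as a semilinear map. -/
def toLinearMap (h : IsPullback μ ν φ hφ M Mp pb) : M →ₛₗ[pullHom hφ] Mp where
  toFun := pb
  map_add' := h.add
  map_smul' := h.smul

theorem hasAEDenseRange_linearCombination (h : IsPullback μ ν φ hφ M Mp pb) :
    HasAEDenseRange (pn μ : Mp → L0 μ) (Finsupp.linearCombination (L0 μ) pb) :=
  .of_forall_dM_lt fun u ε hε => by
    obtain ⟨w, hw, hlt⟩ := h.dense u ε hε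
    rw [← Finsupp.range_linearCombination] at hw
    obtain ⟨f, rfl⟩ := hw
    exact ⟨f, hlt⟩

theorem linearMap_ext (h : IsPullback μ ν φ hφ M Mp pb) {T T' : Mp →ₗ[L0 μ] Q} {g g' : L0 μ}
    (hT : ∀ u, pn μ (T u) ≤ g * pn μ u) (hT' : ∀ u, pn μ (T' u) ≤ g' * pn μ u)
    (hTT' : ∀ v, T (pb v) = T' (pb v)) : T = T' := by
  refine h.hasAEDenseRange_linearCombination.linearMap_ext hT hT' fun f => ?_
  simp only [Finsupp.linearCombination_apply, map_finsuppSum, map_smul, hTT']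

section Lift

variable {T : M →ₛₗ[pullHom hφ] Q} {g : L0 μ}

/-- For rational coefficients `r` the sum `∑ r i • pb (v i)` is the value of `pb` at the element
`∑ r i • v i`, so the bound on `T` applies; rational coefficients suffice. -/
theorem pn_fintype_linearCombination_le (h : IsPullback μ ν φ hφ M Mp pb) (hg : 0 ≤ g)
    (hT : ∀ v, pn μ (T v) ≤ g * pullL0 hφ (pn ν v)) {ι : Type*} [Fintype ι] (v : ι → M)
    (f : ι → L0 μ) :
    pn μ (Fintype.linearCombination (L0 μ) (T ∘ v) f)
      ≤ g * pn μ (Fintype.linearCombination (L0 μ) (pb ∘ v) f) := by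
  refine (isPointwiseSeminorm_pn.comp (Fintype.linearCombination (L0 μ) (T ∘ v))).le_of_forall_rat
    ((isPointwiseSeminorm_pn.comp (Fintype.linearCombination (L0 μ) (pb ∘ v))).const_mul hg)
    (fun r => ?_) f
  rw [fintype_linearCombination_const]
  refine (hT _).trans_eq ?_
  rw [← h.pnorm]
  exact congrArg (g * pn μ ·) (fintype_linearCombination_const h.toLinearMap v fun i => r i).symm

theorem exists_lift (h : IsPullback μ ν φ hφ M Mp pb) (hg : 0 ≤ g)
    (hT : ∀ v, pn μ (T v) ≤ g * pullL0 hφ (pn ν v)) :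
    ∃ T' : Mp →ₗ[L0 μ] Q, (∀ v, T' (pb v) = T v) ∧ ∀ u, pn μ (T' u) ≤ g * pn μ u := by
  have hcomb : ∀ f : M →₀ L0 μ, pn μ (Finsupp.linearCombination (L0 μ) T f)
      ≤ g * pn μ (Finsupp.linearCombination (L0 μ) pb f) := fun f => by
    simpa only [Fintype.linearCombination_apply, Finsupp.linearCombination_apply, Finsupp.sum,
      Function.comp_apply, Finset.sum_coe_sort f.support fun v => f v • T v,
      Finset.sum_coe_sort f.support fun v => f v • pb v] using
      h.pn_fintype_linearCombination_le hg hT ((↑) : f.support → M) fun v => f v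
  obtain ⟨T', hT', hbound⟩ := (h.hasAEDenseRange_linearCombination.const_mul g).exists_extension
    (isPointwiseSeminorm_pn.const_mul hg) hcomb
  refine ⟨T', fun v => ?_, hbound⟩
  simpa only [Finsupp.linearCombination_single, one_smul] using hT' (Finsupp.single v 1)

end Lift

theorem exists_lift_family (h : IsPullback μ ν φ hφ M Mp pb) {S E : Type*} [Ring S]
    [AddCommGroup E] [Module S E] {τ : S →+* L0 μ} (b : E →ₛₗ[τ] M →ₛₗ[pullHom hφ] Q)
    {c : E → L0 μ} (hc : ∀ e, 0 ≤ c e) (hb : ∀ e v, pn μ (b e v) ≤ c e * pullL0 hφ (pn ν v)) :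
    ∃ B : E →ₛₗ[τ] Mp →ₗ[L0 μ] Q, (∀ e v, B e (pb v) = b e v) ∧
      ∀ e u, pn μ (B e u) ≤ c e * pn μ u := by
  have hpn := isPointwiseSeminorm_pn (μ := μ) (M := Q)
  choose B hB hbound using fun e => h.exists_lift (hc e) (hb e)
  refine ⟨{ toFun := B, map_add' := fun e e' => ?_, map_smul' := fun s e => ?_ }, hB, hbound⟩
  · refine h.linearMap_ext (g' := c e + c e') (hbound _) (fun u => ?_) fun v => ?_
    · rw [add_mul]
      exact (hpn.add_le _ _).trans (add_le_add (hbound e u) (hbound e' u))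
    · simp only [hB, LinearMap.add_apply, map_add]
  · refine h.linearMap_ext (g' := |τ s| * c e) (hbound _) (fun u => ?_) fun v => ?_
    · rw [LinearMap.smul_apply, pn_smul, mul_assoc]
      exact mul_le_mul_of_nonneg_left (hbound e u) (abs_nonneg _)
    · simp only [hB, LinearMap.smul_apply, map_smulₛₗ]

theorem exists_bilinear_lift {N : Type*} [AddCommGroup N] [Module (L0 ν) N] [BanachMod ν N]
    {Np : Type*} [AddCommGroup Np] [Module (L0 μ) Np] [BanachMod μ Np] {pbN : N → Np}
    (hM : IsPullback μ ν φ hφ M Mp pb) (hN : IsPullback μ ν φ hφ N Np pbN)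
    (b : M →ₛₗ[pullHom hφ] N →ₛₗ[pullHom hφ] Q)
    (hb : ∀ v w, pn μ (b v w) ≤ pullL0 hφ (pn ν v) * pullL0 hφ (pn ν w)) :
    ∃ B : Mp →ₗ[L0 μ] Np →ₗ[L0 μ] Q, (∀ v w, B (pb v) (pbN w) = b v w) ∧
      ∀ u z, pn μ (B u z) ≤ pn μ u * pn μ z := by
  obtain ⟨B₁, hB₁, hbound₁⟩ := hN.exists_lift_family b isPointwiseSeminorm_pullL0_pn.nonneg hb
  obtain ⟨B₂, hB₂, hbound₂⟩ := hM.exists_lift_family B₁.flip isPointwiseSeminorm_pn.nonneg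
    fun z v => (hbound₁ v z).trans_eq (mul_comm _ _)
  exact ⟨B₂.flip, fun v w => (hB₂ _ _).trans (hB₁ _ _),
    fun u z => (hbound₂ z u).trans_eq (mul_comm _ _)⟩

end IsPullback

end Pullback

/-! ### Projective tensor products -/

section ProjectiveTensor

theorem piReps_nonempty {ν : Measure X} [SFinite ν] {M N : Type*} [AddCommGroup M]
    [Module (L0 ν) M] [BanachMod ν M] [AddCommGroup N] [Module (L0 ν) N] [BanachMod ν N]
    (α : M ⊗[L0 ν] N) : (piReps ν α).Nonempty := by
  suffices ∃ (n : ℕ) (v : Fin n → M) (w : Fin n → N), α = ∑ i, v i ⊗ₜ[L0 ν] w i by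
    obtain ⟨n, v, w, h⟩ := this
    exact ⟨_, n, v, w, h, rfl⟩
  induction α using TensorProduct.induction_on with
  | zero => exact ⟨0, Fin.elim0, Fin.elim0, (Finset.sum_empty).symm⟩
  | tmul v w => exact ⟨1, fun _ => v, fun _ => w, by rw [Fin.sum_univ_one]⟩
  | add α β hα hβ =>
    obtain ⟨n, v, w, rfl⟩ := hα
    obtain ⟨m, v', w', rfl⟩ := hβ
    refine ⟨n + m, Fin.append v v', Fin.append w w', ?_⟩
    simp only [Fin.sum_univ_add, Fin.append_left, Fin.append_right]

variable {Y : Type*} [MeasurableSpace Y] {μ : Measure X} [SFinite μ] {ν : Measure Y} [SFinite ν]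
  {φ : X → Y} {hφ : Measure.QuasiMeasurePreserving φ μ ν}
  {M : Type*} [AddCommGroup M] [Module (L0 ν) M] [BanachMod ν M]
  {N : Type*} [AddCommGroup N] [Module (L0 ν) N] [BanachMod ν N]
  {P : Type*} [AddCommGroup P] [Module (L0 ν) P] [BanachMod ν P]
  {eP : M ⊗[L0 ν] N →ₗ[L0 ν] P}

namespace IsPiTensor

theorem pn_sum_tmul_le (hP : IsPiTensor ν M N P eP) {n : ℕ} (v : Fin n → M) (w : Fin n → N) :
    pn ν (eP (∑ i, v i ⊗ₜ[L0 ν] w i)) ≤ ∑ i, pn ν (v i) * pn ν (w i) :=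
  (hP.pn_emb _).1 ⟨n, v, w, rfl, rfl⟩

theorem pn_tmul_le_s14 (hP : IsPiTensor ν M N P eP) (v : M) (w : N) :
    pn ν (eP (v ⊗ₜ[L0 ν] w)) ≤ pn ν v * pn ν w := by
  simpa only [Fin.sum_univ_one] using hP.pn_sum_tmul_le (n := 1) (fun _ => v) fun _ => w

theorem pn_lift_le {Q : Type*} [AddCommGroup Q] [Module (L0 ν) Q] [BanachMod ν Q]
    (hP : IsPiTensor ν M N P eP) {B : M →ₗ[L0 ν] N →ₗ[L0 ν] Q}
    (hB : ∀ v w, pn ν (B v w) ≤ pn ν v * pn ν w) (α : M ⊗[L0 ν] N) :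
    pn ν (TensorProduct.lift B α) ≤ pn ν (eP α) := by
  refine (hP.pn_emb α).2 ?_
  rintro _ ⟨n, v, w, rfl, rfl⟩
  rw [map_sum]
  exact (isPointwiseSeminorm_pn.sum_le _ _).trans (Finset.sum_le_sum fun i _ => hB _ _)

theorem hasAEDenseRange (hP : IsPiTensor ν M N P eP) : HasAEDenseRange (pn ν : P → L0 ν) eP :=
  .of_forall_dM_lt hP.dense

theorem eq_top_of_forall_tmul_mem (hP : IsPiTensor ν M N P eP) {D : Submodule (L0 ν) P}
    (hD : ∀ v w, eP (v ⊗ₜ[L0 ν] w) ∈ aeClosure D) : aeClosure D = ⊤ := by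
  have hrange : LinearMap.range eP ≤ (aeClosure D).comap LinearMap.id := by
    rintro _ ⟨α, rfl⟩
    rw [Submodule.mem_comap, LinearMap.id_apply]
    induction α using TensorProduct.induction_on with
    | zero => exact map_zero eP ▸ zero_mem _
    | tmul v w => exact hD v w
    | add α β hα hβ => exact map_add eP α β ▸ add_mem hα hβ
  refine eq_top_iff.2 fun p _ => aeClosure_le_comap_aeClosure (g := 1) (fun u => ?_) hrange ?_
  · rw [one_mul, LinearMap.id_apply]
  · refine mem_aeClosure_iff_forall_dM_lt.2 fun ε hε => ?_
    obtain ⟨α, hα⟩ := hP.dense p ε hε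
    exact ⟨_, LinearMap.mem_range_self eP α, hα⟩

theorem semilinearMap_ext {Q : Type*} [AddCommGroup Q] [Module (L0 μ) Q] [BanachMod μ Q]
    (hP : IsPiTensor ν M N P eP) {T T' : P →ₛₗ[pullHom hφ] Q} {g g' : L0 μ}
    (hT : ∀ p, pn μ (T p) ≤ g * pullL0 hφ (pn ν p))
    (hT' : ∀ p, pn μ (T' p) ≤ g' * pullL0 hφ (pn ν p))
    (hTT' : ∀ v w, T (eP (v ⊗ₜ[L0 ν] w)) = T' (eP (v ⊗ₜ[L0 ν] w))) : T = T' := by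
  have hcomp : T.comp eP = T'.comp eP := TensorProduct.ext' hTT'
  exact (hP.hasAEDenseRange.pullL0 hφ).linearMap_ext hT hT' (DFunLike.congr_fun hcomp)

end IsPiTensor

variable {Mp : Type*} [AddCommGroup Mp] [Module (L0 μ) Mp] [BanachMod μ Mp] {pbM : M → Mp}
  {Np : Type*} [AddCommGroup Np] [Module (L0 μ) Np] [BanachMod μ Np] {pbN : N → Np}
  {Q : Type*} [AddCommGroup Q] [Module (L0 μ) Q] [BanachMod μ Q]
  {eQ : Mp ⊗[L0 μ] Np →ₗ[L0 μ] Q}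

namespace IsPullback

theorem map_mem_aeClosure (h : IsPullback μ ν φ hφ M Mp pbM) {T : Mp →ₗ[L0 μ] Q} {g : L0 μ}
    (hT : ∀ u, pn μ (T u) ≤ g * pn μ u) {D : Submodule (L0 μ) Q}
    (hD : ∀ v, T (pbM v) ∈ aeClosure D) (u : Mp) : T u ∈ aeClosure D := by
  refine aeClosure_le_comap_aeClosure hT (Submodule.span_le.2 ?_)
    (mem_aeClosure_iff_forall_dM_lt.2 (h.dense u))
  rintro _ ⟨v, rfl⟩
  exact hD v

theorem aeClosure_span_eq_top (hM : IsPullback μ ν φ hφ M Mp pbM)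
    (hN : IsPullback μ ν φ hφ N Np pbN) (hQ : IsPiTensor μ Mp Np Q eQ) {s : Set Q}
    (hs : ∀ v w, eQ (pbM v ⊗ₜ[L0 μ] pbN w) ∈ s) : aeClosure (Submodule.span (L0 μ) s) = ⊤ := by
  refine hQ.eq_top_of_forall_tmul_mem fun u z => ?_
  refine hN.map_mem_aeClosure (T := eQ.comp (TensorProduct.mk (L0 μ) Mp Np u))
    (hQ.pn_tmul_le_s14 u) (fun w => ?_) z
  refine hM.map_mem_aeClosure (T := eQ.comp ((TensorProduct.mk (L0 μ) Mp Np).flip (pbN w)))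
    (fun u => (hQ.pn_tmul_le_s14 u (pbN w)).trans_eq (mul_comm _ _)) (fun v => ?_) u
  exact le_aeClosure (Submodule.subset_span (hs v w))

/-- The map `v ⊗ w ↦ φ*v ⊗ φ*w` between the algebraic tensor products, as a semilinear map; its
extension to the completions is the pullback map of `ℳ ⊗̂_π 𝒩`. -/
def tensorMap (hM : IsPullback μ ν φ hφ M Mp pbM) (hN : IsPullback μ ν φ hφ N Np pbN) :
    M ⊗[L0 ν] N →ₛₗ[pullHom hφ] Mp ⊗[L0 μ] Np :=
  TensorProduct.map hM.toLinearMap hN.toLinearMap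

variable (hM : IsPullback μ ν φ hφ M Mp pbM) (hN : IsPullback μ ν φ hφ N Np pbN)

theorem tensorMap_tmul (v : M) (w : N) :
    hM.tensorMap hN (v ⊗ₜ[L0 ν] w) = pbM v ⊗ₜ[L0 μ] pbN w :=
  rfl

theorem pn_tensorMap_le (hP : IsPiTensor ν M N P eP) (hQ : IsPiTensor μ Mp Np Q eQ)
    (α : M ⊗[L0 ν] N) : pn μ (eQ (hM.tensorMap hN α)) ≤ pullL0 hφ (pn ν (eP α)) := by
  refine le_pullL0_of_isGLB hφ (piReps_nonempty α) (hP.pn_emb α) ?_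
  rintro _ ⟨n, v, w, rfl, rfl⟩
  simpa only [map_sum, tensorMap_tmul, hM.pnorm, hN.pnorm, ← pullHom_apply, map_mul] using
    hQ.pn_sum_tmul_le (fun i => pbM (v i)) fun i => pbN (w i)

/-- The bilinear map `(v, w) ↦ S (v ⊗ w)` extends to the pullbacks, and the linearization of the
extension is dominated by the projective norm. -/
theorem pn_map_le_pn_tensorMap (hP : IsPiTensor ν M N P eP) (hQ : IsPiTensor μ Mp Np Q eQ)
    {Q' : Type*} [AddCommGroup Q'] [Module (L0 μ) Q'] [BanachMod μ Q'] (S : P →ₛₗ[pullHom hφ] Q')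
    (hS : ∀ p, pn μ (S p) ≤ pullL0 hφ (pn ν p)) (α : M ⊗[L0 ν] N) :
    pn μ (S (eP α)) ≤ pn μ (eQ (hM.tensorMap hN α)) := by
  obtain ⟨B, hB, hbound⟩ := hM.exists_bilinear_lift hN
    ((TensorProduct.mk (L0 ν) M N).compr₂ₛₗ (S.comp eP)) fun v w =>
      calc pn μ (S (eP (v ⊗ₜ[L0 ν] w)))
          ≤ pullL0 hφ (pn ν (eP (v ⊗ₜ[L0 ν] w))) := hS _
        _ ≤ pullL0 hφ (pn ν v * pn ν w) := pullL0_mono hφ (hP.pn_tmul_le_s14 v w)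
        _ = pullL0 hφ (pn ν v) * pullL0 hφ (pn ν w) := map_mul (pullHom hφ) _ _
  have hlift : S.comp eP = (TensorProduct.lift B).comp (hM.tensorMap hN) :=
    TensorProduct.ext' fun v w => (hB v w).symm
  calc pn μ (S (eP α)) = pn μ (TensorProduct.lift B (hM.tensorMap hN α)) :=
        congrArg (pn μ) (DFunLike.congr_fun hlift α)
    _ ≤ pn μ (eQ (hM.tensorMap hN α)) := hQ.pn_lift_le hbound _

theorem pn_tensorMap (hP : IsPiTensor ν M N P eP) (hQ : IsPiTensor μ Mp Np Q eQ)
    (α : M ⊗[L0 ν] N) : pn μ (eQ (hM.tensorMap hN α)) = pullL0 hφ (pn ν (eP α)) := by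
  refine (hM.pn_tensorMap_le hN hP hQ α).antisymm ?_
  obtain ⟨ω, hω, hbound⟩ := (isPointwiseSeminorm_pn (μ := ν) (M := P)).exists_dual_vector (eP α)
  refine le_trans ?_ (hM.pn_map_le_pn_tensorMap hN hP hQ
    ((pullHom hφ).toSemilinearMap.comp ω) (fun p => ?_) α)
  · rw [← hω]
    exact le_abs_self (pullL0 hφ (ω (eP α)))
  · exact (pullL0_abs hφ (ω p)).symm.trans_le (pullL0_mono hφ (hbound p))

theorem exists_tensor_extension (hP : IsPiTensor ν M N P eP) (hQ : IsPiTensor μ Mp Np Q eQ) :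
    ∃ Φ : P →ₛₗ[pullHom hφ] Q, (∀ α, Φ (eP α) = eQ (hM.tensorMap hN α)) ∧
      ∀ p, pn μ (Φ p) = pullL0 hφ (pn ν p) := by
  have hnorm := hM.pn_tensorMap hN hP hQ
  have hdense := hP.hasAEDenseRange.pullL0 hφ
  obtain ⟨Φ, hΦ, hbound⟩ := hdense.exists_extension isPointwiseSeminorm_pullL0_pn
    (T := eQ.comp (hM.tensorMap hN)) fun α => (hnorm α).le
  refine ⟨Φ, hΦ, fun p => (hbound p).antisymm ?_⟩
  refine hdense.le_of_forall_le isPointwiseSeminorm_pullL0_pn (isPointwiseSeminorm_pn.comp Φ)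
    (g := 1) (k := 1) (fun p => (one_mul _).ge) (fun p => (hbound p).trans_eq (one_mul _).symm)
    (fun α => ?_) p
  rw [hΦ]
  exact (hnorm α).ge

end IsPullback

end ProjectiveTensor

theorem pullback_commutes_with_projective_tensor_general
    {Y : Type*} [MeasurableSpace Y] (μ : Measure X) [SFinite μ]
    (ν : Measure Y) [SFinite ν] (φ : X → Y) (hφ : Measure.QuasiMeasurePreserving φ μ ν)
    (M : Type*) [AddCommGroup M] [Module (L0 ν) M] [BanachMod ν M]
    (N : Type*) [AddCommGroup N] [Module (L0 ν) N] [BanachMod ν N]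
    (Mp : Type*) [AddCommGroup Mp] [Module (L0 μ) Mp] [BanachMod μ Mp]
    (Np : Type*) [AddCommGroup Np] [Module (L0 μ) Np] [BanachMod μ Np]
    (pbM : M → Mp) (hpbM : IsPullback μ ν φ hφ M Mp pbM)
    (pbN : N → Np) (hpbN : IsPullback μ ν φ hφ N Np pbN)
    (P : Type*) [AddCommGroup P] [Module (L0 ν) P] [BanachMod ν P]
    (eP : M ⊗[L0 ν] N →ₗ[L0 ν] P) (hP : IsPiTensor ν M N P eP)
    (Q : Type*) [AddCommGroup Q] [Module (L0 μ) Q] [BanachMod μ Q]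
    (eQ : Mp ⊗[L0 μ] Np →ₗ[L0 μ] Q) (hQ : IsPiTensor μ Mp Np Q eQ) :
    ∃ Φ : P → Q,
      ((∀ p q : P, Φ (p + q) = Φ p + Φ q)
        ∧ (∀ (f : L0 ν) (p : P), Φ (f • p) = pullL0 hφ f • Φ p)
        ∧ (∃ g : L0 μ, 0 ≤ g ∧ ∀ p : P, pn μ (Φ p) ≤ g * pullL0 hφ (pn ν p))
        ∧ (∀ (v : M) (w : N), Φ (eP (v ⊗ₜ[L0 ν] w)) = eQ (pbM v ⊗ₜ[L0 μ] pbN w)))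
      ∧ (∀ Φ' : P → Q,
          ((∀ p q : P, Φ' (p + q) = Φ' p + Φ' q)
            ∧ (∀ (f : L0 ν) (p : P), Φ' (f • p) = pullL0 hφ f • Φ' p)
            ∧ (∃ g : L0 μ, 0 ≤ g ∧ ∀ p : P, pn μ (Φ' p) ≤ g * pullL0 hφ (pn ν p))
            ∧ (∀ (v : M) (w : N), Φ' (eP (v ⊗ₜ[L0 ν] w)) = eQ (pbM v ⊗ₜ[L0 μ] pbN w))) →
          Φ' = Φ)
      ∧ (∀ p : P, pn μ (Φ p) = pullL0 hφ (pn ν p))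
      ∧ IsPullback μ ν φ hφ P Q Φ := by
  obtain ⟨Φ, hΦ, hnorm⟩ := hpbM.exists_tensor_extension hpbN hP hQ
  have hbound : ∀ p, pn μ (Φ p) ≤ 1 * pullL0 hφ (pn ν p) := fun p => by
    rw [one_mul, hnorm]
  have hpure : ∀ v w, Φ (eP (v ⊗ₜ[L0 ν] w)) = eQ (pbM v ⊗ₜ[L0 μ] pbN w) := fun v w => by
    rw [hΦ, IsPullback.tensorMap_tmul]
  have hgen := hpbM.aeClosure_span_eq_top hpbN hQ (s := Set.range Φ) fun v w => ⟨_, hpure v w⟩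
  refine ⟨Φ, ⟨Φ.map_add, Φ.map_smulₛₗ, ⟨1, zero_le_one, hbound⟩, hpure⟩, ?_, hnorm,
    Φ.map_add, Φ.map_smulₛₗ, hnorm, fun u => ?_⟩
  · rintro Φ' ⟨hadd, hsmul, ⟨g, -, hg⟩, hpure'⟩
    let T : P →ₛₗ[pullHom hφ] Q := { toFun := Φ', map_add' := hadd, map_smul' := hsmul }
    exact congrArg DFunLike.coe <| hP.semilinearMap_ext (T := T) hg hbound fun v w =>
      (hpure' v w).trans (hpure v w).symm
  · exact mem_aeClosure_iff_forall_dM_lt.1 (hgen ▸ Submodule.mem_top)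

/-- Let `𝕏`, `𝕐` be separable σ-finite measure spaces and `φ : X → Y`
measurable with `φ_# 𝔪_X ≪ 𝔪_Y`. Let `ℳ`, `𝒩` be Banach `L⁰(𝕐)`-modules. Then there is a
unique homomorphism `φ* : ℳ ⊗̂_π 𝒩 → (φ*ℳ) ⊗̂_π (φ*𝒩)` with
`φ*(v ⊗ w) = (φ*v) ⊗ (φ*w)`; it satisfies `|φ* α| = |α| ∘ φ` and its image generates the
target, so that the projective tensor product of the pullbacks, together with `φ*`, is a
realization of the pullback of the projective tensor product. Here `P` realizes the projective
tensor product of `ℳ` and `𝒩` over `𝕐`, while `Q` realizes that of the pullbacks `Mp`,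
`Np` over `𝕏`. -/
theorem pullback_commutes_with_projective_tensor
    {Y : Type*} [MeasurableSpace Y] (μ : Measure X) [SigmaFinite μ]
    (ν : Measure Y) [SigmaFinite ν] (hμsep : MeasSeparable μ) (hνsep : MeasSeparable ν)
    (φ : X → Y) (hφ : Measure.QuasiMeasurePreserving φ μ ν)
    (M : Type*) [AddCommGroup M] [Module (L0 ν) M] [BanachMod ν M]
    (N : Type*) [AddCommGroup N] [Module (L0 ν) N] [BanachMod ν N]
    (Mp : Type*) [AddCommGroup Mp] [Module (L0 μ) Mp] [BanachMod μ Mp]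
    (Np : Type*) [AddCommGroup Np] [Module (L0 μ) Np] [BanachMod μ Np]
    (pbM : M → Mp) (hpbM : IsPullback μ ν φ hφ M Mp pbM)
    (pbN : N → Np) (hpbN : IsPullback μ ν φ hφ N Np pbN)
    (P : Type*) [AddCommGroup P] [Module (L0 ν) P] [BanachMod ν P]
    (eP : M ⊗[L0 ν] N →ₗ[L0 ν] P) (hP : IsPiTensor ν M N P eP)
    (Q : Type*) [AddCommGroup Q] [Module (L0 μ) Q] [BanachMod μ Q]
    (eQ : Mp ⊗[L0 μ] Np →ₗ[L0 μ] Q) (hQ : IsPiTensor μ Mp Np Q eQ) :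
    ∃ Φ : P → Q,
      ((∀ p q : P, Φ (p + q) = Φ p + Φ q)
        ∧ (∀ (f : L0 ν) (p : P), Φ (f • p) = pullL0 hφ f • Φ p)
        ∧ (∃ g : L0 μ, 0 ≤ g ∧ ∀ p : P, pn μ (Φ p) ≤ g * pullL0 hφ (pn ν p))
        ∧ (∀ (v : M) (w : N), Φ (eP (v ⊗ₜ[L0 ν] w)) = eQ (pbM v ⊗ₜ[L0 μ] pbN w)))
      ∧ (∀ Φ' : P → Q,
          ((∀ p q : P, Φ' (p + q) = Φ' p + Φ' q)
            ∧ (∀ (f : L0 ν) (p : P), Φ' (f • p) = pullL0 hφ f • Φ' p)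
            ∧ (∃ g : L0 μ, 0 ≤ g ∧ ∀ p : P, pn μ (Φ' p) ≤ g * pullL0 hφ (pn ν p))
            ∧ (∀ (v : M) (w : N), Φ' (eP (v ⊗ₜ[L0 ν] w)) = eQ (pbM v ⊗ₜ[L0 μ] pbN w))) →
          Φ' = Φ)
      ∧ (∀ p : P, pn μ (Φ p) = pullL0 hφ (pn ν p))
      ∧ IsPullback μ ν φ hφ P Q Φ :=
  pullback_commutes_with_projective_tensor_general μ ν φ hφ M N Mp Np pbM hpbM pbN hpbN
    P eP hP Q eQ hQ

end Paper
end
end
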